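/- arXiv:2105.07124 — 3 statements merged into one kernel-verified Lean document; each statement's English description precedes it below -/
import Mathlib

section
/- Let f(t) = at⁴ + bt³ + ct² + dt + e with a > 0 and e > 0, and let Δ = 4(12ae − 3bd + c²)³ − (72ace + 9bcd − 2c³ − 27ad² − 27b²e)². Then f(t) ≥ 0 for all t > 0 if and only if one of the following holds: (1) Δ ≤ 0 and b√e + d√a > 0; or (2) b ≥ 0, d ≥ 0, and 2√(ae) + c ≥ 0; or (3) Δ ≥ 0, |b√e − d√a| ≤ 4√(ace + 2ae√(ae)), and either (i) −2√(ae) ≤ c ≤ 6√(ae), or (ii) c − 6√(ae) > 0 and b√e + d√a ≥ −4√(ace − 2ae√(ae)). -/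
/-- If a continuous function times `(t - r) * (t - s)` is nonnegative on `(0, ∞)`, where
`0 < r < s`, then that function is nonpositive on `[r, s]`. -/
theorem nonpos_on_Icc_of_mul_nonneg {g : ℝ → ℝ} (hg : Continuous g) {r s : ℝ} (hr : 0 < r)
    (hrs : r < s) (h : ∀ t, 0 < t → 0 ≤ g t * ((t - r) * (t - s))) :
    ∀ t ∈ Set.Icc r s, g t ≤ 0 := by
  have hsub : Set.Ioo r s ⊆ {t | g t ≤ 0} := by
    rintro t ⟨h1, h2⟩
    by_contra hpos
    have hpos : 0 < g t := not_le.mp hpos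
    have hneg : (t - r) * (t - s) < 0 := mul_neg_of_pos_of_neg (by linarith) (by linarith)
    linarith [h t (by linarith), mul_neg_of_pos_of_neg hpos hneg]
  have hcl := closure_minimal hsub (isClosed_le hg continuous_const)
  rw [closure_Ioo hrs.ne] at hcl
  exact fun t ht => hcl ht

/-- A monic quadratic with linear coefficient `W * y`, constant coefficient `y ^ 2` and `W < -2`
has two distinct positive roots. -/
theorem exists_pos_roots {W y : ℝ} (hy : 0 < y) (hW : W < -2) :
    ∃ r s, 0 < r ∧ r < s ∧ r + s = -(W * y) ∧ r * s = y ^ 2 := by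
  have hD : 0 < W ^ 2 - 4 := by nlinarith
  have hq := Real.sq_sqrt hD.le
  have hq0 := Real.sqrt_pos.mpr hD
  set q := Real.sqrt (W ^ 2 - 4)
  have hqW : q < -W := by nlinarith
  refine ⟨y * ((-W - q) / 2), y * ((-W + q) / 2), ?_, ?_, by ring, ?_⟩
  · exact mul_pos hy (by linarith)
  · exact mul_lt_mul_of_pos_left (by linarith) hy
  · linear_combination (-y ^ 2 / 4) * hq

/-- Every real `t ^ 4 + α * t ^ 3 + β * t ^ 2 + γ * t + 1` factors as
`(t ^ 2 + U * x * t + x ^ 2) * (t ^ 2 + W * y * t + y ^ 2)` with `x, y > 0` and `x * y = 1`. -/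
theorem exists_quartic_factorization (α β γ : ℝ) :
    ∃ U W x y : ℝ, 0 < x ∧ 0 < y ∧ x * y = 1 ∧ α = U * x + W * y ∧ γ = U * y + W * x ∧
      β = x ^ 2 + y ^ 2 + U * W := by
  -- A root `k ≥ 2` of the resolvent yields the factorization with `k = x ^ 2 + y ^ 2`.
  have build : ∀ k S D : ℝ, 2 ≤ k → α + γ = S * Real.sqrt (k + 2) →
      α - γ = D * Real.sqrt (k - 2) → 4 * (β - k) = S ^ 2 - D ^ 2 →
      ∃ U W x y : ℝ, 0 < x ∧ 0 < y ∧ x * y = 1 ∧ α = U * x + W * y ∧ γ = U * y + W * x ∧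
        β = x ^ 2 + y ^ 2 + U * W := by
    intro k S D hk h1 h2 h3
    have hp := Real.sq_sqrt (show 0 ≤ k + 2 by linarith)
    have hq := Real.sq_sqrt (show 0 ≤ k - 2 by linarith)
    have hp0 := Real.sqrt_pos.mpr (show 0 < k + 2 by linarith)
    have hq0 := Real.sqrt_nonneg (k - 2)
    have hqp : Real.sqrt (k - 2) < Real.sqrt (k + 2) :=
      Real.sqrt_lt_sqrt (by linarith) (by linarith)
    set p := Real.sqrt (k + 2)
    set q := Real.sqrt (k - 2)
    refine ⟨(S + D) / 2, (S - D) / 2, (p + q) / 2, (p - q) / 2, by linarith, by linarith,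
      ?_, ?_, ?_, ?_⟩
    · linear_combination (1 / 4) * hp - (1 / 4) * hq
    · linear_combination (1 / 2) * h1 + (1 / 2) * h2
    · linear_combination (1 / 2) * h1 - (1 / 2) * h2
    · linear_combination (1 / 4) * h3 - (1 / 2) * hp - (1 / 2) * hq
  by_cases hαγ : α = γ
  · subst hαγ
    by_cases hdisc : 4 * (β - 2) ≤ α ^ 2
    · have hD := Real.sq_sqrt (show 0 ≤ α ^ 2 - 4 * (β - 2) by linarith)
      refine build 2 α (Real.sqrt (α ^ 2 - 4 * (β - 2))) le_rfl ?_ ?_ (by rw [hD]; ring)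
      · rw [show (2 + 2 : ℝ) = 2 ^ 2 by norm_num, Real.sqrt_sq (by norm_num)]; ring
      · simp
    · push Not at hdisc
      have hβ : 2 ≤ β := by nlinarith [sq_nonneg α]
      obtain ⟨k, hk, hk0⟩ := intermediate_value_Icc' hβ
        (f := fun k : ℝ => (β - k) * (k + 2) - α ^ 2) (by fun_prop)
        (show (0 : ℝ) ∈ _ from ⟨by nlinarith [sq_nonneg α], by nlinarith⟩)
      simp only at hk0
      have hk2 : 0 < k + 2 := by linarith [hk.1]
      have hp := Real.sq_sqrt hk2.le
      have hp0 := Real.sqrt_pos.mpr hk2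
      refine build k (2 * α / Real.sqrt (k + 2)) 0 hk.1 ?_ (by simp) ?_
      · field_simp; ring
      · rw [div_pow, hp]; field_simp; linear_combination 4 * hk0
  · have hB : 0 < (α - γ) ^ 2 := by positivity [sub_ne_zero.mpr hαγ]
    set B := (α - γ) ^ 2 with hBdef
    have hβ := le_abs_self β
    have hβ0 := abs_nonneg β
    obtain ⟨k, hk, hk0⟩ := intermediate_value_Icc'
      (show (2 : ℝ) ≤ 3 + |β| + B by linarith)
      (f := fun k : ℝ => 4 * (β - k) * (k ^ 2 - 4) - (α + γ) ^ 2 * (k - 2) + B * (k + 2))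
      (by fun_prop) (show (0 : ℝ) ∈ _ from ⟨by
        set K := 3 + |β| + B with hK
        have h1 : B ≤ 4 * (K - β) * (K - 2) := by nlinarith
        have h2 := mul_le_mul_of_nonneg_right h1 (show 0 ≤ K + 2 by linarith)
        have h3 := mul_nonneg (sq_nonneg (α + γ)) (show 0 ≤ K - 2 by linarith)
        nlinarith, by norm_num; linarith⟩)
    simp only at hk0
    have hk2 : 2 < k := by
      rcases hk.1.lt_or_eq with h | h
      · exact h
      · subst h; norm_num at hk0; linarith
    have hkp : 0 < k + 2 := by linarith
    have hkm : 0 < k - 2 := by linarith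
    have hp := Real.sq_sqrt hkp.le
    have hq := Real.sq_sqrt hkm.le
    have hp0 := Real.sqrt_pos.mpr hkp
    have hq0 := Real.sqrt_pos.mpr hkm
    refine build k ((α + γ) / Real.sqrt (k + 2)) ((α - γ) / Real.sqrt (k - 2)) hk.1 ?_ ?_ ?_
    · field_simp
    · field_simp
    · rw [div_pow, div_pow, hp, hq]; field_simp; linear_combination hk0

/-- The product of the two quadratic factors, where `x * y = 1`. -/
theorem quartic_eq_mul {U W x y : ℝ} (hxy : x * y = 1) (t : ℝ) :
    t ^ 4 + (U * x + W * y) * t ^ 3 + (x ^ 2 + y ^ 2 + U * W) * t ^ 2 +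
      (U * y + W * x) * t + 1 =
    (t ^ 2 + U * x * t + x ^ 2) * (t ^ 2 + W * y * t + y ^ 2) := by
  linear_combination (-U * W * t ^ 2 - W * x * t - U * y * t - (x * y + 1)) * hxy

/-- The discriminant in terms of the discriminants and the resultant of the two factors. -/
theorem quartic_disc_eq {U W x y : ℝ} (hxy : x * y = 1) :
    4 * (12 - 3 * (U * x + W * y) * (U * y + W * x) + (x ^ 2 + y ^ 2 + U * W) ^ 2) ^ 3 -
      (72 * (x ^ 2 + y ^ 2 + U * W) +
        9 * (U * x + W * y) * (x ^ 2 + y ^ 2 + U * W) * (U * y + W * x) -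
        2 * (x ^ 2 + y ^ 2 + U * W) ^ 3 - 27 * (U * y + W * x) ^ 2 -
        27 * (U * x + W * y) ^ 2) ^ 2 =
    27 * ((U ^ 2 - 4) * (W ^ 2 - 4)) *
      ((x ^ 2 + y ^ 2 - U * W / 2) ^ 2 - (U ^ 2 - 4) * (W ^ 2 - 4) / 4) ^ 2 := by
  have h1 : (U * x + W * y) * (U * y + W * x) = U ^ 2 + W ^ 2 + U * W * (x ^ 2 + y ^ 2) := by
    linear_combination (U ^ 2 + W ^ 2) * hxy
  have h2 : (U * y + W * x) ^ 2 + (U * x + W * y) ^ 2 =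
      (U ^ 2 + W ^ 2) * (x ^ 2 + y ^ 2) + 4 * (U * W) := by
    linear_combination 4 * (U * W) * hxy
  generalize x ^ 2 + y ^ 2 = k at *
  generalize U * x + W * y = α at *
  generalize U * y + W * x = γ at *
  rw [show 12 - 3 * α * γ + (k + U * W) ^ 2 = 12 - 3 * (α * γ) + (k + U * W) ^ 2 by ring,
    show 72 * (k + U * W) + 9 * α * (k + U * W) * γ - 2 * (k + U * W) ^ 3 - 27 * γ ^ 2 -
      27 * α ^ 2 = 72 * (k + U * W) + 9 * (α * γ) * (k + U * W) - 2 * (k + U * W) ^ 3 -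
      27 * (γ ^ 2 + α ^ 2) by ring, h1, h2]
  ring

/-- A quadratic factor with `-2 ≤ U` is nonnegative on `(0, ∞)`. -/
theorem quadratic_factor_nonneg {U x t : ℝ} (hx : 0 < x) (hU : -2 ≤ U) (ht : 0 < t) :
    0 ≤ t ^ 2 + U * x * t + x ^ 2 := by
  nlinarith [sq_nonneg (t - x), mul_nonneg (by linarith : 0 ≤ U + 2) (mul_pos hx ht).le]

theorem two_le_sq_add_sq {x y : ℝ} (hxy : x * y = 1) : 2 ≤ x ^ 2 + y ^ 2 := by
  nlinarith [sq_nonneg (x - y)]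

/-- If `W < -2` and the product of the factors is nonnegative on `(0, ∞)`, the factors agree. -/
theorem factors_eq_of_nonneg {U W x y : ℝ} (hx : 0 < x) (hy : 0 < y) (hW : W < -2)
    (h : ∀ t : ℝ, 0 < t → 0 ≤ (t ^ 2 + U * x * t + x ^ 2) * (t ^ 2 + W * y * t + y ^ 2)) :
    U * x = W * y ∧ x = y := by
  obtain ⟨r, s, hr, hrs, hsum, hprod⟩ := exists_pos_roots hy hW
  have hq2 : ∀ t, t ^ 2 + W * y * t + y ^ 2 = (t - r) * (t - s) := fun t => by
    linear_combination t * hsum - hprod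
  have hneg := nonpos_on_Icc_of_mul_nonneg (g := fun t => t ^ 2 + U * x * t + x ^ 2)
    (by fun_prop) hr hrs (fun t ht => by simpa only [hq2] using h t ht)
  have hAr : r ^ 2 + U * x * r + x ^ 2 ≤ 0 := hneg r ⟨le_rfl, hrs.le⟩
  have hAs : s ^ 2 + U * x * s + x ^ 2 ≤ 0 := hneg s ⟨hrs.le, le_rfl⟩
  rcases lt_or_ge U (-2) with hU | hU
  · obtain ⟨r', s', hr', hrs', hsum', hprod'⟩ := exists_pos_roots hx hU
    have hq1 : ∀ t, t ^ 2 + U * x * t + x ^ 2 = (t - r') * (t - s') := fun t => by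
      linear_combination t * hsum' - hprod'
    have hneg' := nonpos_on_Icc_of_mul_nonneg (g := fun t => t ^ 2 + W * y * t + y ^ 2)
      (by fun_prop) hr' hrs' (fun t ht => by
        have := h t ht
        rw [hq1, mul_comm] at this
        exact this)
    have hBr : (r' - r) * (r' - s) ≤ 0 := by simpa only [hq2] using hneg' r' ⟨le_rfl, hrs'.le⟩
    have hBs : (s' - r) * (s' - s) ≤ 0 := by simpa only [hq2] using hneg' s' ⟨hrs'.le, le_rfl⟩
    rw [hq1] at hAr hAs
    have e1 : r = r' := by
      apply le_antisymm
      · by_contra hc; push Not at hc; nlinarith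
      · by_contra hc; push Not at hc; nlinarith
    have e2 : s = s' := by
      apply le_antisymm
      · by_contra hc; push Not at hc; nlinarith
      · by_contra hc; push Not at hc; nlinarith
    subst e1 e2
    exact ⟨by linarith, by nlinarith⟩
  · have hs : 0 < s := hr.trans hrs
    have e1 : r = x := by
      have := mul_nonneg (by linarith : 0 ≤ U + 2) (mul_pos hx hr).le
      have : (r - x) ^ 2 = 0 := le_antisymm (by nlinarith) (sq_nonneg _)
      nlinarith [pow_eq_zero_iff (two_ne_zero) |>.mp this]
    have e2 : s = x := by
      have := mul_nonneg (by linarith : 0 ≤ U + 2) (mul_pos hx hs).le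
      have : (s - x) ^ 2 = 0 := le_antisymm (by nlinarith) (sq_nonneg _)
      nlinarith [pow_eq_zero_iff (two_ne_zero) |>.mp this]
    linarith

/-- Sufficiency when the discriminant is nonpositive. -/
theorem neg_two_le_of_disc_nonpos {U W k : ℝ} (hk : 2 ≤ k) (hUW : 0 < U + W)
    (hΔ : 27 * ((U ^ 2 - 4) * (W ^ 2 - 4)) *
      ((k - U * W / 2) ^ 2 - (U ^ 2 - 4) * (W ^ 2 - 4) / 4) ^ 2 ≤ 0) : -2 ≤ W := by
  by_contra! hW
  have h1 : 0 < (U ^ 2 - 4) * (W ^ 2 - 4) := mul_pos (by nlinarith) (by nlinarith)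
  have hres : 0 < (k - U * W / 2) ^ 2 - (U ^ 2 - 4) * (W ^ 2 - 4) / 4 := by
    nlinarith [mul_pos (by linarith : 0 < U) (by linarith : 0 < -W), sq_nonneg (U - W)]
  have := mul_pos (mul_pos (by norm_num : (0 : ℝ) < 27) h1) (pow_pos hres 2)
  linarith

/-- Sufficiency when the discriminant is nonnegative: a factor that changes sign on `(0, ∞)`
forces the factors to agree. -/
theorem factors_eq_of_disc_nonneg {U W k : ℝ} (hk : 2 ≤ k) (hW : W < -2)
    (hΔ : 0 ≤ 27 * ((U ^ 2 - 4) * (W ^ 2 - 4)) *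
      ((k - U * W / 2) ^ 2 - (U ^ 2 - 4) * (W ^ 2 - 4) / 4) ^ 2)
    (hdiff : (U - W) ^ 2 * (k - 2) ≤ 16 * (k + U * W + 2))
    (hsum : k + U * W ≤ 6 ∨
      (0 ≤ U + W ∨ (U + W) ^ 2 * (k + 2) ≤ 16 * (k + U * W - 2))) : U = W ∧ k = 2 := by
  have hW2 : 0 < W ^ 2 - 4 := by nlinarith
  rcases le_or_gt 2 U with hU | hU
  · have h1 : 4 * (U * -W) * (k - 2) ≤ (U - W) ^ 2 * (k - 2) :=
      mul_le_mul_of_nonneg_right (by nlinarith [sq_nonneg (U + W)]) (by linarith)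
    have h2 : 4 < U * -W := by nlinarith
    nlinarith
  rcases lt_or_ge (-2) U with hU' | hU'
  · have h1 : (U ^ 2 - 4) * (W ^ 2 - 4) < 0 := mul_neg_of_neg_of_pos (by nlinarith) hW2
    have h2 : 0 < (k - U * W / 2) ^ 2 - (U ^ 2 - 4) * (W ^ 2 - 4) / 4 := by
      nlinarith [sq_nonneg (k - U * W / 2)]
    nlinarith [pow_pos h2 2]
  · have hP : 4 < U * W := by nlinarith
    rcases hsum with h | h | h
    · linarith
    · linarith
    · have h16 : 16 < (U + W) ^ 2 := by nlinarith
      have e1 : (U - W) ^ 2 = 0 := le_antisymm (by nlinarith) (sq_nonneg _)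
      have e2 : U = W := by linarith [pow_eq_zero_iff (two_ne_zero) |>.mp e1]
      subst e2
      exact ⟨rfl, by nlinarith⟩

/-- Bound on the sum of the odd coefficients when both factors are nonnegative on `ℝ`. -/
theorem sum_bound_of_abs_le_two {U W k : ℝ} (hU : -2 ≤ U) (hU' : U ≤ 2) (hW : -2 ≤ W)
    (hW' : W ≤ 2) (hβ : 6 < k + U * W) : (U + W) ^ 2 * (k + 2) ≤ 16 * (k + U * W - 2) := by
  have h1 := mul_nonneg (by linarith : 0 ≤ 2 - U) (by linarith : 0 ≤ 2 - W)
  have h2 := mul_nonneg (by linarith : 0 ≤ 2 + U) (by linarith : 0 ≤ 2 + W)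
  have hσ : 4 * (U + W) ^ 2 ≤ (4 + U * W) ^ 2 := by nlinarith [mul_nonneg h1 h2]
  have hP : U * W ≤ 4 := by nlinarith
  have hP' : -4 ≤ U * W := by nlinarith
  have hσ16 : (U + W) ^ 2 ≤ 16 := by nlinarith
  generalize (U + W) ^ 2 = σ at *
  generalize U * W = P at *
  have h3 : σ * (8 - P) ≤ 64 := by
    have := mul_le_mul_of_nonneg_right hσ (by linarith : 0 ≤ 8 - P)
    nlinarith [mul_nonneg (sq_nonneg (P - 4)) (by linarith : 0 ≤ P + 8)]
  nlinarith [mul_nonneg (by linarith : 0 ≤ 16 - σ) (by linarith : 0 ≤ k + P - 6)]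

/-- The discriminant is nonpositive when one factor has real roots and the other has none or a
double one. -/
theorem disc_nonpos_of_mixed {A B : ℝ} (hA : -2 ≤ A) (hA' : A ≤ 2) (hB : 2 < B) (R : ℝ) :
    27 * ((A ^ 2 - 4) * (B ^ 2 - 4)) * R ^ 2 ≤ 0 := by
  have h1 := mul_nonpos_of_nonpos_of_nonneg
    (show A ^ 2 - 4 ≤ 0 by nlinarith) (show 0 ≤ B ^ 2 - 4 by nlinarith)
  exact mul_nonpos_of_nonpos_of_nonneg (by linarith) (sq_nonneg R)

/-- The discriminant of the normalized quartic `t ^ 4 + α * t ^ 3 + β * t ^ 2 + γ * t + 1`, up to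
the factor `27`. -/
def normalizedDisc (α β γ : ℝ) : ℝ :=
  4 * (12 - 3 * α * γ + β ^ 2) ^ 3 -
    (72 * β + 9 * α * β * γ - 2 * β ^ 3 - 27 * γ ^ 2 - 27 * α ^ 2) ^ 2

set_option maxHeartbeats 1000000 in
/-- The criterion for the normalized quartic. -/
theorem normalized_quartic_nonneg_on_pos (α β γ : ℝ) :
    (∀ t : ℝ, 0 < t → 0 ≤ t ^ 4 + α * t ^ 3 + β * t ^ 2 + γ * t + 1) ↔
      ((normalizedDisc α β γ ≤ 0 ∧ 0 < α + γ) ∨ (0 ≤ α ∧ 0 ≤ γ ∧ 0 ≤ 2 + β) ∨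
        (0 ≤ normalizedDisc α β γ ∧ |α - γ| ≤ 4 * Real.sqrt (β + 2) ∧
          ((-2 ≤ β ∧ β ≤ 6) ∨ (0 < β - 6 ∧ -4 * Real.sqrt (β - 2) ≤ α + γ)))) := by
  obtain ⟨U, W, x, y, hx, hy, hxy, hα, hγ, hβ⟩ := exists_quartic_factorization α β γ
  have hk := two_le_sq_add_sq hxy
  have hdisc : normalizedDisc α β γ = 27 * ((U ^ 2 - 4) * (W ^ 2 - 4)) *
      ((x ^ 2 + y ^ 2 - U * W / 2) ^ 2 - (U ^ 2 - 4) * (W ^ 2 - 4) / 4) ^ 2 := by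
    rw [normalizedDisc, hα, hβ, hγ, quartic_disc_eq hxy]
  have hf : ∀ t, t ^ 4 + α * t ^ 3 + β * t ^ 2 + γ * t + 1 =
      (t ^ 2 + U * x * t + x ^ 2) * (t ^ 2 + W * y * t + y ^ 2) := fun t => by
    rw [hα, hβ, hγ, quartic_eq_mul hxy]
  have hsum : α + γ = (U + W) * (x + y) := by rw [hα, hγ]; ring
  have hdiff : (α - γ) ^ 2 = (U - W) ^ 2 * (x ^ 2 + y ^ 2 - 2) := by
    rw [hα, hγ]; linear_combination (-2 * (U - W) ^ 2) * hxy
  have hsum2 : (α + γ) ^ 2 = (U + W) ^ 2 * (x ^ 2 + y ^ 2 + 2) := by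
    rw [hsum]; linear_combination (2 * (U + W) ^ 2) * hxy
  have hxy0 : 0 < x + y := by linarith
  simp only [hf]
  constructor
  · intro h
    by_cases heq : U * x = W * y ∧ x = y
    · obtain ⟨h1, rfl⟩ := heq
      obtain rfl : U = W := mul_right_cancel₀ hx.ne' h1
      have hx1 : x = 1 := by nlinarith
      subst hx1
      have hβ' : β = 2 + U ^ 2 := by rw [hβ]; ring
      refine Or.inr (Or.inr ⟨by rw [hdisc]; apply le_of_eq; ring, ?_, ?_⟩)
      · rw [hα, hγ, sub_self, abs_zero]; positivity
      · rcases le_or_gt β 6 with h6 | h6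
        · exact Or.inl ⟨by nlinarith [sq_nonneg U], h6⟩
        · refine Or.inr ⟨by linarith, ?_⟩
          rw [hβ', show 2 + U ^ 2 - 2 = U ^ 2 by ring, Real.sqrt_sq_eq_abs, hsum]
          linarith [neg_abs_le U]
    · have hW : -2 ≤ W := by
        by_contra! hW
        exact heq (factors_eq_of_nonneg hx hy hW h)
      have hU : -2 ≤ U := by
        by_contra! hU
        have := factors_eq_of_nonneg hy hx hU fun t ht => by rw [mul_comm]; exact h t ht
        exact heq ⟨this.1.symm, this.2.symm⟩
      rcases le_or_gt U 2 with hU' | hU' <;> rcases le_or_gt W 2 with hW' | hW'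
      · have hβ2 : -2 ≤ β := by nlinarith
        refine Or.inr (Or.inr ⟨?_, ?_, ?_⟩)
        · rw [hdisc]
          have := mul_nonneg_of_nonpos_of_nonpos
            (show U ^ 2 - 4 ≤ 0 by nlinarith) (show W ^ 2 - 4 ≤ 0 by nlinarith)
          positivity
        · apply abs_le_of_sq_le_sq _ (by positivity)
          rw [mul_pow, Real.sq_sqrt (by linarith), hdiff, hβ]
          have : (U - W) ^ 2 ≤ 16 := by nlinarith
          nlinarith
        · rcases le_or_gt β 6 with h6 | h6
          · exact Or.inl ⟨hβ2, h6⟩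
          · refine Or.inr ⟨by linarith, ?_⟩
            have hb := sum_bound_of_abs_le_two hU hU' hW hW' (hβ ▸ h6)
            rw [← hsum2, ← hβ] at hb
            have : |α + γ| ≤ 4 * Real.sqrt (β - 2) := by
              apply abs_le_of_sq_le_sq _ (by positivity)
              rw [mul_pow, Real.sq_sqrt (by linarith)]
              linarith
            linarith [neg_abs_le (α + γ)]
      · exact Or.inl ⟨hdisc ▸ disc_nonpos_of_mixed hU hU' hW' _, hsum ▸ mul_pos (by linarith) hxy0⟩
      · refine Or.inl ⟨?_, hsum ▸ mul_pos (by linarith) hxy0⟩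
        rw [hdisc]
        convert disc_nonpos_of_mixed hW hW' hU' _ using 2
        rw [mul_comm (W ^ 2 - 4)]
      · refine Or.inr (Or.inl ⟨?_, ?_, ?_⟩)
        · rw [hα]; positivity
        · rw [hγ]; positivity
        · nlinarith
  · rintro (⟨hΔ, hpos⟩ | ⟨hα0, hγ0, hβ0⟩ | ⟨hΔ, habs, hcase⟩) t ht
    · have hUW : 0 < U + W := by rw [hsum] at hpos; exact (pos_iff_pos_of_mul_pos hpos).mpr hxy0
      rw [hdisc] at hΔ
      have hW := neg_two_le_of_disc_nonpos hk hUW hΔ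
      have hU := neg_two_le_of_disc_nonpos (U := W) (W := U) hk (by linarith)
        (by convert hΔ using 2 <;> ring)
      exact mul_nonneg (quadratic_factor_nonneg hx hU ht) (quadratic_factor_nonneg hy hW ht)
    · rw [← hf]
      have h3 := mul_nonneg hα0 (pow_pos ht 3).le
      have h1 := mul_nonneg hγ0 ht.le
      nlinarith [sq_nonneg (t ^ 2 - 1), mul_nonneg hβ0 (sq_nonneg t)]
    · rw [hdisc] at hΔ
      have hβ2 : -2 ≤ β := by rcases hcase with h | h <;> linarith [h.1]
      have hd : (U - W) ^ 2 * (x ^ 2 + y ^ 2 - 2) ≤ 16 * (x ^ 2 + y ^ 2 + U * W + 2) := by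
        rw [← hdiff, ← hβ, ← sq_abs]
        have := pow_le_pow_left₀ (abs_nonneg _) habs 2
        rw [mul_pow, Real.sq_sqrt (by linarith)] at this
        linarith
      have hs : x ^ 2 + y ^ 2 + U * W ≤ 6 ∨ (0 ≤ U + W ∨
          (U + W) ^ 2 * (x ^ 2 + y ^ 2 + 2) ≤ 16 * (x ^ 2 + y ^ 2 + U * W - 2)) := by
        rw [← hβ, ← hsum2]
        rcases hcase with h | ⟨h6, hl⟩
        · exact Or.inl h.2
        · rcases le_or_gt 0 (U + W) with h0 | h0
          · exact Or.inr (Or.inl h0)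
          · have hneg : α + γ < 0 := hsum ▸ mul_neg_of_neg_of_pos h0 hxy0
            have := pow_le_pow_left₀ (show 0 ≤ -(α + γ) by linarith)
              (show -(α + γ) ≤ 4 * Real.sqrt (β - 2) by linarith) 2
            rw [mul_pow, Real.sq_sqrt (by linarith)] at this
            exact Or.inr (Or.inr (by linarith))
      have hsquare : U = W ∧ x ^ 2 + y ^ 2 = 2 →
          0 ≤ (t ^ 2 + U * x * t + x ^ 2) * (t ^ 2 + W * y * t + y ^ 2) := by
        rintro ⟨rfl, hk2⟩
        have : (x - y) ^ 2 = 0 := by linear_combination hk2 - 2 * hxy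
        obtain rfl : x = y := by linarith [pow_eq_zero_iff (two_ne_zero) |>.mp this]
        exact mul_self_nonneg _
      rcases lt_or_ge W (-2) with hW | hW
      · exact hsquare (factors_eq_of_disc_nonneg hk hW hΔ hd hs)
      rcases lt_or_ge U (-2) with hU | hU
      · have := factors_eq_of_disc_nonneg (U := W) (W := U) hk hU
          (by convert hΔ using 2 <;> ring) (by convert hd using 1 <;> ring)
          (by rw [mul_comm W U, add_comm W U]; exact hs)
        exact hsquare ⟨this.1.symm, this.2⟩
      · exact mul_nonneg (quadratic_factor_nonneg hx hU ht) (quadratic_factor_nonneg hy hW ht)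

/-- Qi–Song–Zhang: for a quartic `f(t) = at⁴ + bt³ + ct² + dt + e` with `a > 0`, `e > 0`,
`f(t) ≥ 0` for all `t > 0` iff one of the stated conditions on the coefficients and the
discriminant-type quantity `Δ` holds. -/
theorem quartic_nonneg_on_pos (a b c d e Δ : ℝ) (ha : 0 < a) (he : 0 < e)
    (hΔ : Δ = 4 * (12 * a * e - 3 * b * d + c ^ 2) ^ 3 -
      (72 * a * c * e + 9 * b * c * d - 2 * c ^ 3 - 27 * a * d ^ 2 - 27 * b ^ 2 * e) ^ 2) :
    (∀ t : ℝ, 0 < t → 0 ≤ a * t ^ 4 + b * t ^ 3 + c * t ^ 2 + d * t + e) ↔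
      ((Δ ≤ 0 ∧ 0 < b * Real.sqrt e + d * Real.sqrt a) ∨
       (0 ≤ b ∧ 0 ≤ d ∧ 0 ≤ 2 * Real.sqrt (a * e) + c) ∨
       (0 ≤ Δ ∧
        |b * Real.sqrt e - d * Real.sqrt a| ≤
          4 * Real.sqrt (a * c * e + 2 * a * e * Real.sqrt (a * e)) ∧
        ((-2 * Real.sqrt (a * e) ≤ c ∧ c ≤ 6 * Real.sqrt (a * e)) ∨
         (0 < c - 6 * Real.sqrt (a * e) ∧
          -4 * Real.sqrt (a * c * e - 2 * a * e * Real.sqrt (a * e)) ≤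
            b * Real.sqrt e + d * Real.sqrt a)))) := by
  obtain ⟨p, hp, rfl⟩ : ∃ p : ℝ, 0 < p ∧ a = p ^ 4 :=
    ⟨Real.sqrt (Real.sqrt a), by positivity, by
      rw [show 4 = 2 * 2 from rfl, pow_mul, Real.sq_sqrt (by positivity), Real.sq_sqrt ha.le]⟩
  obtain ⟨q, hq, rfl⟩ : ∃ q : ℝ, 0 < q ∧ e = q ^ 4 :=
    ⟨Real.sqrt (Real.sqrt e), by positivity, by
      rw [show 4 = 2 * 2 from rfl, pow_mul, Real.sq_sqrt (by positivity), Real.sq_sqrt he.le]⟩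
  obtain ⟨α, rfl⟩ : ∃ α, b = α * (p ^ 3 * q) := ⟨b / (p ^ 3 * q), by field_simp⟩
  obtain ⟨β, rfl⟩ : ∃ β, c = β * (p ^ 2 * q ^ 2) := ⟨c / (p ^ 2 * q ^ 2), by field_simp⟩
  obtain ⟨γ, rfl⟩ : ∃ γ, d = γ * (p * q ^ 3) := ⟨d / (p * q ^ 3), by field_simp⟩
  have hm : 0 < p ^ 3 * q ^ 3 := by positivity
  have hm2 : 0 < p ^ 2 * q ^ 2 := by positivity
  have hsp : Real.sqrt (p ^ 4) = p ^ 2 := by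
    rw [show p ^ 4 = (p ^ 2) ^ 2 by ring, Real.sqrt_sq (by positivity)]
  have hsq : Real.sqrt (q ^ 4) = q ^ 2 := by
    rw [show q ^ 4 = (q ^ 2) ^ 2 by ring, Real.sqrt_sq (by positivity)]
  have hspq : Real.sqrt (p ^ 4 * q ^ 4) = p ^ 2 * q ^ 2 := by
    rw [show p ^ 4 * q ^ 4 = (p ^ 2 * q ^ 2) ^ 2 by ring, Real.sqrt_sq (by positivity)]
  have hscale : ∀ z, Real.sqrt ((p ^ 3 * q ^ 3) ^ 2 * z) = p ^ 3 * q ^ 3 * Real.sqrt z :=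
    fun z => by rw [Real.sqrt_mul (by positivity), Real.sqrt_sq hm.le]
  have hΔ' : Δ = (p ^ 12 * q ^ 12) * normalizedDisc α β γ := by
    rw [hΔ, normalizedDisc]; ring
  have hm12 : 0 < p ^ 12 * q ^ 12 := by positivity
  have hnonpos : p ^ 12 * q ^ 12 * normalizedDisc α β γ ≤ 0 ↔ normalizedDisc α β γ ≤ 0 :=
    ⟨fun h => nonpos_of_mul_nonpos_right h hm12, mul_nonpos_of_nonneg_of_nonpos hm12.le⟩
  rw [hsp, hsq, hspq,
    show p ^ 4 * (β * (p ^ 2 * q ^ 2)) * q ^ 4 + 2 * p ^ 4 * q ^ 4 * (p ^ 2 * q ^ 2) =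
      (p ^ 3 * q ^ 3) ^ 2 * (β + 2) by ring,
    show p ^ 4 * (β * (p ^ 2 * q ^ 2)) * q ^ 4 - 2 * p ^ 4 * q ^ 4 * (p ^ 2 * q ^ 2) =
      (p ^ 3 * q ^ 3) ^ 2 * (β - 2) by ring, hscale, hscale,
    show α * (p ^ 3 * q) * q ^ 2 + γ * (p * q ^ 3) * p ^ 2 = (p ^ 3 * q ^ 3) * (α + γ) by ring,
    show α * (p ^ 3 * q) * q ^ 2 - γ * (p * q ^ 3) * p ^ 2 = (p ^ 3 * q ^ 3) * (α - γ) by ring,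
    abs_mul, abs_of_pos hm,
    show 4 * (p ^ 3 * q ^ 3 * Real.sqrt (β + 2)) = p ^ 3 * q ^ 3 * (4 * Real.sqrt (β + 2)) by ring,
    show -4 * (p ^ 3 * q ^ 3 * Real.sqrt (β - 2)) =
      p ^ 3 * q ^ 3 * (-4 * Real.sqrt (β - 2)) by ring,
    show 2 * (p ^ 2 * q ^ 2) + β * (p ^ 2 * q ^ 2) = p ^ 2 * q ^ 2 * (2 + β) by ring,
    show β * (p ^ 2 * q ^ 2) - 6 * (p ^ 2 * q ^ 2) = p ^ 2 * q ^ 2 * (β - 6) by ring,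
    mul_le_mul_iff_right₀ hm, mul_le_mul_iff_right₀ hm, mul_le_mul_iff_left₀ hm2,
    mul_le_mul_iff_left₀ hm2, mul_nonneg_iff_of_pos_right (show 0 < p ^ 3 * q by positivity),
    mul_nonneg_iff_of_pos_right (show 0 < p * q ^ 3 by positivity),
    mul_nonneg_iff_of_pos_left hm2, mul_pos_iff_of_pos_left hm2, mul_pos_iff_of_pos_left hm,
    hΔ', mul_nonneg_iff_of_pos_left hm12, hnonpos,
    ← normalized_quartic_nonneg_on_pos]
  have hsub : ∀ s, p ^ 4 * (q / p * s) ^ 4 + α * (p ^ 3 * q) * (q / p * s) ^ 3 +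
      β * (p ^ 2 * q ^ 2) * (q / p * s) ^ 2 + γ * (p * q ^ 3) * (q / p * s) + q ^ 4 =
      q ^ 4 * (s ^ 4 + α * s ^ 3 + β * s ^ 2 + γ * s + 1) := fun s => by
    field_simp
  constructor
  · intro h s hs
    have := h (q / p * s) (by positivity)
    rw [hsub] at this
    exact (mul_nonneg_iff_of_pos_left he).mp this
  · intro h t ht
    have := mul_nonneg he.le (h (p / q * t) (by positivity))
    rwa [← hsub, show q / p * (p / q * t) = t by field_simp] at this
end

section
/- Let A be a 4th order 2-dimensional symmetric tensor with a₁₁₁₁ > 0 and a₂₂₂₂ > 0. Then A is copositive (Ax⁴ ≥ 0 for all x ∈ ℝ²₊) if and only if one of the following holds: (1) I³ − 27J² ≤ 0 and a₁₂₂₂√a₁₁₁₁ + a₁₁₁₂√a₂₂₂₂ > 0; or (2) a₁₂₂₂ ≥ 0, a₁₁₁₂ ≥ 0, and 3a₁₁₂₂ + √(a₁₁₁₁a₂₂₂₂) ≥ 0; or (3) I³ − 27J² ≥ 0, |a₁₁₁₂√a₂₂₂₂ − a₁₂₂₂√a₁₁₁₁| ≤ √(6a₁₁₁₁a₁₁₂₂a₂₂₂₂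 + 2a₁₁₁₁a₂₂₂₂√(a₁₁₁₁a₂₂₂₂)), and either (i) −√(a₁₁₁₁a₂₂₂₂) ≤ 3a₁₁₂₂ ≤ 3√(a₁₁₁₁a₂₂₂₂), or (ii) a₁₁₂₂ > √(a₁₁₁₁a₂₂₂₂) and a₁₁₁₂√a₂₂₂₂ + a₁₂₂₂√a₁₁₁₁ ≥ −√(6a₁₁₁₁a₁₁₂₂a₂₂₂₂ − 2a₁₁₁₁a₂₂₂₂√(a₁₁₁₁a₂₂₂₂)). -/
namespace QuarticCopositive

/-- The quartic `t⁴ + 4at³ + 6bt² + 4ct + 1`. -/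
def quartic (a b c t : ℝ) : ℝ := t ^ 4 + 4 * a * t ^ 3 + 6 * b * t ^ 2 + 4 * c * t + 1

/-- The discriminant `I³ - 27J²` of `quartic a b c`, up to the factor `256`. -/
def disc (a b c : ℝ) : ℝ :=
  (1 - 4 * a * c + 3 * b ^ 2) ^ 3 - 27 * (b + 2 * a * b * c - b ^ 3 - c ^ 2 - a ^ 2) ^ 2

theorem continuous_quartic (a b c : ℝ) : Continuous (quartic a b c) := by
  unfold quartic
  fun_prop

theorem quartic_neg (a b c t : ℝ) : quartic (-a) b (-c) t = quartic a b c (-t) := by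
  unfold quartic
  ring

/-- The discriminant of a product of two monic quadratics. -/
theorem disc_of_factors {a b c β γ δ ε : ℝ} (ha : 4 * a = β + δ) (hb : 6 * b = γ + ε + β * δ)
    (hc : 4 * c = β * ε + γ * δ) (h1 : γ * ε = 1) :
    256 * disc a b c = (β ^ 2 - 4 * γ) * (δ ^ 2 - 4 * ε) *
      ((ε - γ) ^ 2 + (β - δ) * (β * ε - δ * γ)) ^ 2 := by
  obtain rfl : a = (β + δ) / 4 := by linarith
  obtain rfl : b = (γ + ε + β * δ) / 6 := by linarith
  obtain rfl : c = (β * ε + γ * δ) / 4 := by linarith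
  have key : disc ((β + δ) / 4) ((γ + ε + β * δ) / 6) ((β * ε + γ * δ) / 4) =
      (γ * ε - 4 * ((β + δ) / 4) * ((β * ε + γ * δ) / 4) +
        3 * ((γ + ε + β * δ) / 6) ^ 2) ^ 3 -
      27 * ((γ + ε + β * δ) / 6 * (γ * ε) +
        2 * ((β + δ) / 4) * ((γ + ε + β * δ) / 6) * ((β * ε + γ * δ) / 4) -
        ((γ + ε + β * δ) / 6) ^ 3 - ((β * ε + γ * δ) / 4) ^ 2 -
        ((β + δ) / 4) ^ 2 * (γ * ε)) ^ 2 := by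
    rw [h1, disc]
    ring
  rw [key]
  ring

/-- A factorization of `quartic a b c` into two monic quadratics whose constant terms are
the reciprocal squares `w²` and `v²`. -/
structure Factorization (a b c P Q w v : ℝ) : Prop where
  w_pos : 0 < w
  v_pos : 0 < v
  mul_eq_one : w * v = 1
  a_eq : 2 * a = P * w + Q * v
  c_eq : 2 * c = P * v + Q * w
  b_eq : 6 * b = w ^ 2 + v ^ 2 + 4 * P * Q

namespace Factorization

variable {a b c P Q w v : ℝ}

theorem quartic_eq (h : Factorization a b c P Q w v) (t : ℝ) :
    quartic a b c t = (t ^ 2 + 2 * P * w * t + w ^ 2) * (t ^ 2 + 2 * Q * v * t + v ^ 2) := by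
  obtain ⟨-, -, h1, ha, hc, hb⟩ := h
  unfold quartic
  linear_combination 2 * t ^ 3 * ha + t ^ 2 * hb + 2 * t * hc
    - (4 * P * Q * t ^ 2 + 2 * t * (P * v + Q * w) + w * v + 1) * h1

theorem disc_eq (h : Factorization a b c P Q w v) :
    16 * disc a b c = (P ^ 2 - 1) * (Q ^ 2 - 1) *
      ((v ^ 2 - w ^ 2) ^ 2 + 4 * (P * w - Q * v) * (P * v - Q * w)) ^ 2 := by
  obtain ⟨-, -, h1, ha, hc, hb⟩ := h
  have key := disc_of_factors (a := a) (b := b) (c := c) (β := 2 * P * w) (γ := w ^ 2)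
    (δ := 2 * Q * v) (ε := v ^ 2) (by linarith)
    (by linear_combination hb - 4 * P * Q * h1)
    (by linear_combination 2 * hc - 2 * (P * v + Q * w) * h1)
    (by linear_combination (w * v + 1) * h1)
  have hres : (2 * P * w - 2 * Q * v) * (2 * P * w * v ^ 2 - 2 * Q * v * w ^ 2) =
      4 * (P * w - Q * v) * (P * v - Q * w) := by
    linear_combination 4 * (P * w - Q * v) * (P * v - Q * w) * h1
  rw [hres] at key
  have hdisc : ((2 * P * w) ^ 2 - 4 * w ^ 2) * ((2 * Q * v) ^ 2 - 4 * v ^ 2) =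
      16 * ((P ^ 2 - 1) * (Q ^ 2 - 1)) := by
    linear_combination 16 * (P ^ 2 - 1) * (Q ^ 2 - 1) * (w * v + 1) * h1
  rw [hdisc] at key
  linarith

theorem neg (h : Factorization (-a) b (-c) P Q w v) : Factorization a b c (-P) (-Q) w v := by
  obtain ⟨hw, hv, h1, ha, hc, hb⟩ := h
  exact ⟨hw, hv, h1, by linarith, by linarith, by linarith⟩

theorem add_eq (h : Factorization a b c P Q w v) : 2 * (a + c) = (P + Q) * (w + v) := by
  linear_combination h.a_eq + h.c_eq

theorem sub_eq (h : Factorization a b c P Q w v) : 2 * (a - c) = (P - Q) * (w - v) := by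
  linear_combination h.a_eq - h.c_eq

end Factorization

theorem exists_quartic_nonneg_gt (a b c t : ℝ) : ∃ T, t < T ∧ 0 ≤ quartic a b c T := by
  have ha := abs_nonneg a
  have hb := abs_nonneg b
  have hc := abs_nonneg c
  have ht := abs_nonneg t
  set T := 1 + 4 * |a| + 6 * |b| + 4 * |c| + |t| with hT
  refine ⟨T, by linarith [le_abs_self t], ?_⟩
  have hT1 : 1 ≤ T := by linarith
  have hT0 : 0 ≤ T := by linarith
  have h2 : T ^ 2 ≤ T ^ 3 := pow_le_pow_right₀ hT1 (by norm_num)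
  have h3 : T ≤ T ^ 3 := le_self_pow₀ hT1 (by norm_num)
  have h4 : (4 * |a| + 6 * |b| + 4 * |c|) * T ^ 3 ≤ T * T ^ 3 := by
    gcongr
    linarith
  have e1 : -|a| * T ^ 3 ≤ a * T ^ 3 := by
    gcongr
    exact neg_abs_le a
  have e2 : -|b| * T ^ 2 ≤ b * T ^ 2 := by
    gcongr
    exact neg_abs_le b
  have e3 : -|c| * T ≤ c * T := by
    gcongr
    exact neg_abs_le c
  have e4 := mul_le_mul_of_nonneg_left h2 hb
  have e5 := mul_le_mul_of_nonneg_left h3 hc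
  unfold quartic
  nlinarith

/-- A quartic that is negative at a positive point has two distinct positive roots, hence
splits off an indefinite quadratic factor. -/
theorem exists_factorization_of_pos {a b c t : ℝ} (ht : 0 < t) (hneg : quartic a b c t < 0) :
    ∃ P Q w v, P < -1 ∧ Factorization a b c P Q w v := by
  have h0 : quartic a b c 0 = 1 := by simp [quartic]
  obtain ⟨r, ⟨hr0, hrt⟩, hr⟩ := intermediate_value_Icc' ht.le
    (continuous_quartic a b c).continuousOn (show (0 : ℝ) ∈ Set.Icc _ _ from
      ⟨hneg.le, by rw [h0]; norm_num⟩)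
  obtain ⟨T, htT, hT⟩ := exists_quartic_nonneg_gt a b c t
  obtain ⟨s, ⟨hts, -⟩, hs⟩ := intermediate_value_Icc htT.le
    (continuous_quartic a b c).continuousOn (show (0 : ℝ) ∈ Set.Icc _ _ from ⟨hneg.le, hT⟩)
  have hr_pos : 0 < r := hr0.lt_of_ne (by rintro rfl; rw [h0] at hr; norm_num at hr)
  have hrt' : r < t := hrt.lt_of_ne (by rintro rfl; exact hneg.ne hr)
  have hrs : r < s := hrt'.trans_le hts
  have hs_pos : 0 < s := hr_pos.trans hrs
  unfold quartic at hr hs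
  have hsub : s - r ≠ 0 := by linarith
  obtain ⟨δ, hδ⟩ : ∃ δ, δ = 4 * a + (r + s) := ⟨_, rfl⟩
  obtain ⟨ε, hε⟩ : ∃ ε, ε = 6 * b - r * s + (r + s) * δ := ⟨_, rfl⟩
  have hlin : 4 * c = r * s * δ - (r + s) * ε := by
    apply mul_left_cancel₀ hsub
    subst hε hδ
    linear_combination hs - hr
  have hone : r * s * ε = 1 := by
    subst hε hδ
    linear_combination r * hlin - hr
  obtain ⟨w, hw, hw2⟩ : ∃ w, 0 < w ∧ w ^ 2 = r * s :=
    ⟨√(r * s), by positivity, Real.sq_sqrt (by positivity)⟩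
  have hε2 : ε = w⁻¹ ^ 2 := by
    rw [← hw2] at hone
    field_simp
    linarith
  refine ⟨-(r + s) / (2 * w), δ * w / 2, w, w⁻¹, ?_, hw, by positivity,
    mul_inv_cancel₀ hw.ne', ?_, ?_, ?_⟩
  · rw [div_lt_iff₀ (by positivity)]
    nlinarith [pow_pos (sub_pos.2 hrs) 2]
  · field_simp
    linarith
  · rw [← hw2, hε2] at hlin
    field_simp
    field_simp at hlin
    linarith
  · rw [← hw2, hε2] at hε
    field_simp
    field_simp at hε
    linarith

/-- If the quartic is nonnegative on the real line then its discriminant is nonnegative. -/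
theorem disc_nonneg {a b c : ℝ} (h : ∀ t, 0 ≤ quartic a b c t) : 0 ≤ disc a b c := by
  obtain ⟨z, hz⟩ : ∃ z : ℂ, z ^ 4 + 4 * a * z ^ 3 + 6 * b * z ^ 2 + 4 * c * z + 1 = 0 := by
    open Polynomial in
    let p : ℂ[X] := X ^ 4 + (C (4 * (a : ℂ)) * X ^ 3 + C (6 * (b : ℂ)) * X ^ 2 +
      C (4 * (c : ℂ)) * X + C 1)
    have hp : p.degree = 4 := by
      dsimp only [p]
      compute_degree!
    obtain ⟨z, hz⟩ := Complex.exists_root (f := p) (by rw [hp]; norm_num)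
    refine ⟨z, ?_⟩
    simp [p, Polynomial.IsRoot] at hz
    linear_combination hz
  obtain ⟨x, y⟩ := z
  obtain ⟨δ, hδ⟩ : ∃ δ, δ = 4 * a + 2 * x := ⟨_, rfl⟩
  obtain ⟨ε, hε⟩ : ∃ ε, ε = 6 * b - (x ^ 2 + y ^ 2) + 2 * x * δ := ⟨_, rfl⟩
  have hre := congrArg Complex.re hz
  have him := congrArg Complex.im hz
  simp [pow_succ, Complex.add_re, Complex.mul_re] at hre him
  have hlin : 4 * c = -2 * x * ε + (x ^ 2 + y ^ 2) * δ := by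
    by_cases hy : y = 0
    · subst hy
      have hx : quartic a b c x = 0 := by
        unfold quartic
        linarith
      have hmin : IsLocalMin (quartic a b c) x :=
        Filter.Eventually.of_forall fun t => by rw [hx]; exact h t
      have hd : HasDerivAt (quartic a b c)
          (4 * x ^ 3 + 4 * a * (3 * x ^ 2) + 6 * b * (2 * x) + 4 * c) x := by
        unfold quartic
        have := (((((hasDerivAt_pow 4 x).add ((hasDerivAt_pow 3 x).const_mul (4 * a))).add
          ((hasDerivAt_pow 2 x).const_mul (6 * b))).add
          ((hasDerivAt_id x).const_mul (4 * c))).add_const 1)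
        refine this.congr_deriv ?_
        norm_num
      have := hmin.hasDerivAt_eq_zero hd
      subst hε hδ
      linear_combination this
    · apply mul_left_cancel₀ hy
      subst hε hδ
      linear_combination him
  have hone : (x ^ 2 + y ^ 2) * ε = 1 := by
    subst hε hδ
    linear_combination x * hlin - hre
  have key := disc_of_factors (a := a) (b := b) (c := c) (β := -2 * x) (γ := x ^ 2 + y ^ 2)
    (δ := δ) (ε := ε) (by linarith) (by linarith) hlin hone
  by_cases hy : y = 0
  · subst hy
    ring_nf at key
    linarith
  · have hpos : 0 < y ^ 2 := by positivity
    have hquad : δ ^ 2 - 4 * ε ≤ 0 := by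
      have hval : quartic a b c (-δ / 2) =
          ((-δ / 2 - x) ^ 2 + y ^ 2) * ((-δ / 2) ^ 2 + δ * (-δ / 2) + ε) := by
        unfold quartic
        subst hε
        linear_combination (-δ / 2) ^ 3 * (-hδ) + (-δ / 2) * hlin - hone
      have hnonneg := h (-δ / 2)
      rw [hval] at hnonneg
      have := nonneg_of_mul_nonneg_right hnonneg (by positivity)
      linarith
    have : 0 ≤ ((-2 * x) ^ 2 - 4 * (x ^ 2 + y ^ 2)) * (δ ^ 2 - 4 * ε) :=
      mul_nonneg_of_nonpos_of_nonpos (by nlinarith) hquad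
    have := mul_nonneg this
      (sq_nonneg ((ε - (x ^ 2 + y ^ 2)) ^ 2 + (-2 * x - δ) * (-2 * x * ε - δ * (x ^ 2 + y ^ 2))))
    linarith

/-- Averaging over the involution `t ↦ -1/t`. -/
theorem sub_sq_le {a b c : ℝ} (h : ∀ t, 0 ≤ quartic a b c t) : (a - c) ^ 2 ≤ 6 * b + 2 := by
  obtain ⟨t, ht, hroot⟩ : ∃ t : ℝ, t ≠ 0 ∧ t ^ 2 + (a - c) * t - 1 = 0 := by
    have hs := Real.sq_sqrt (show 0 ≤ (a - c) ^ 2 + 4 by positivity)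
    have : ((-(a - c) + √((a - c) ^ 2 + 4)) / 2) ^ 2 +
        (a - c) * ((-(a - c) + √((a - c) ^ 2 + 4)) / 2) - 1 = 0 := by
      linear_combination hs / 4
    refine ⟨_, ?_, this⟩
    intro h0
    rw [h0] at this
    norm_num at this
  have hinv : t⁻¹ = t + (a - c) := by
    field_simp
    linarith
  have h1 := mul_nonneg (h t) (sq_nonneg t⁻¹)
  have h2 := mul_nonneg (h (-t⁻¹)) (sq_nonneg t)
  have hsum : quartic a b c t * t⁻¹ ^ 2 + quartic a b c (-t⁻¹) * t ^ 2 =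
      2 * ((t - t⁻¹) ^ 2 + 2 + 6 * b + 2 * (a - c) * (t - t⁻¹)) := by
    unfold quartic
    field_simp
    ring
  have hdiff : t - t⁻¹ = -(a - c) := by linarith
  rw [hdiff] at hsum
  nlinarith

/-- Averaging over the involution `t ↦ 1/t`. -/
theorem add_sq_le {a b c : ℝ} (h : ∀ t, 0 ≤ quartic a b c t) (hb : 1 < b) :
    (a + c) ^ 2 ≤ 6 * b - 2 := by
  by_cases hac : (a + c) ^ 2 ≤ 4
  · linarith
  obtain ⟨t, ht, hroot⟩ : ∃ t : ℝ, t ≠ 0 ∧ t ^ 2 + (a + c) * t + 1 = 0 := by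
    have hs := Real.sq_sqrt (show 0 ≤ (a + c) ^ 2 - 4 by linarith)
    have : ((-(a + c) + √((a + c) ^ 2 - 4)) / 2) ^ 2 +
        (a + c) * ((-(a + c) + √((a + c) ^ 2 - 4)) / 2) + 1 = 0 := by
      linear_combination hs / 4
    refine ⟨_, ?_, this⟩
    intro h0
    rw [h0] at this
    norm_num at this
  have hinv : t⁻¹ = -t - (a + c) := by
    field_simp
    linarith
  have h1 := mul_nonneg (h t) (sq_nonneg t⁻¹)
  have h2 := mul_nonneg (h t⁻¹) (sq_nonneg t)
  have hsum : quartic a b c t * t⁻¹ ^ 2 + quartic a b c t⁻¹ * t ^ 2 =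
      2 * ((t + t⁻¹) ^ 2 - 2 + 6 * b + 2 * (a + c) * (t + t⁻¹)) := by
    unfold quartic
    field_simp
    ring
  have hadd : t + t⁻¹ = -(a + c) := by linarith
  rw [hadd] at hsum
  nlinarith

theorem add_nonpos_of_neg {a b c t : ℝ} (ht : 0 < t) (hneg : quartic a b c t < 0)
    (hD : disc a b c ≤ 0) : a + c ≤ 0 := by
  obtain ⟨P, Q, w, v, hP, hF⟩ := exists_factorization_of_pos ht hneg
  have hsum := hF.add_eq
  have hw := hF.w_pos
  have hv := hF.v_pos
  suffices hPQ : P + Q ≤ 0 by nlinarith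
  by_contra! hPQ
  have hdisc := hF.disc_eq
  have hP2 : 0 < P ^ 2 - 1 := by nlinarith
  have hQ2 : 0 < Q ^ 2 - 1 := by nlinarith
  have hres : (v ^ 2 - w ^ 2) ^ 2 + 4 * (P * w - Q * v) * (P * v - Q * w) ≠ 0 := by
    have h1 : 0 < Q * v - P * w := by nlinarith
    have h2 : 0 < Q * w - P * v := by nlinarith
    nlinarith [mul_pos h1 h2, sq_nonneg (v ^ 2 - w ^ 2)]
  have : 0 < (P ^ 2 - 1) * (Q ^ 2 - 1) *
      ((v ^ 2 - w ^ 2) ^ 2 + 4 * (P * w - Q * v) * (P * v - Q * w)) ^ 2 := by positivity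
  linarith

theorem quartic_nonneg_of_disc_nonneg {a b c t : ℝ} (ht : 0 < t) (hD : 0 ≤ disc a b c)
    (hsub : (a - c) ^ 2 ≤ 6 * b + 2)
    (hb : b ≤ 1 ∨ (1 < b ∧ -√(6 * b - 2) ≤ a + c)) : 0 ≤ quartic a b c t := by
  by_contra! hneg
  obtain ⟨P, Q, w, v, hP, hF⟩ := exists_factorization_of_pos ht hneg
  have hw := hF.w_pos
  have hv := hF.v_pos
  have hwv := hF.mul_eq_one
  have hP2 : 0 < P ^ 2 - 1 := by nlinarith
  have hsq : 4 * (a - c) ^ 2 = (P - Q) ^ 2 * (w - v) ^ 2 := by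
    linear_combination (2 * (a - c) + (P - Q) * (w - v)) * hF.sub_eq
  have hb1 : 6 * b + 2 = (w - v) ^ 2 + 4 * (1 + P * Q) := by
    linear_combination hF.b_eq + 2 * hwv
  have hQ2 : 1 ≤ Q ^ 2 := by
    by_contra! hQ
    have hdisc := hF.disc_eq
    have hres : (v ^ 2 - w ^ 2) ^ 2 + 4 * (P * w - Q * v) * (P * v - Q * w) ≠ 0 := by
      have hres_eq : (v ^ 2 - w ^ 2) ^ 2 + 4 * (P * w - Q * v) * (P * v - Q * w) =
          (v ^ 2 + w ^ 2 - 2 * P * Q) ^ 2 - 4 * (P ^ 2 - 1) * (Q ^ 2 - 1) := by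
        linear_combination (4 * (P ^ 2 + Q ^ 2) - 4 * (w * v + 1)) * hwv
      have := mul_pos hP2 (sub_pos.2 hQ)
      rw [hres_eq]
      nlinarith [sq_nonneg (v ^ 2 + w ^ 2 - 2 * P * Q)]
    have := mul_pos (mul_pos hP2 (sub_pos.2 hQ)) (pow_pos (abs_pos.2 hres) 2)
    rw [sq_abs] at this
    linarith
  rcases le_or_gt 0 Q with hQ0 | hQ0
  · have hQ1 : 1 ≤ Q := by nlinarith
    have h4 : 4 ≤ (P - Q) ^ 2 := by nlinarith
    have h5 := mul_le_mul_of_nonneg_right h4 (sq_nonneg (w - v))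
    nlinarith
  · have hQ1 : Q ≤ -1 := by nlinarith
    have hPQ : 1 < P * Q := by nlinarith
    rcases hb with hb | ⟨hb, hle⟩
    · nlinarith [sq_nonneg (w - v)]
    · have hsum := hF.add_eq
      have hneg' : a + c ≤ 0 := by nlinarith
      have hadd : (a + c) ^ 2 ≤ 6 * b - 2 := by
        have := pow_le_pow_left₀ (by linarith : 0 ≤ -(a + c)) (by linarith : -(a + c) ≤ _) 2
        rwa [Real.sq_sqrt (by linarith), neg_sq] at this
      have hsq' : 4 * (a + c) ^ 2 = (P + Q) ^ 2 * ((w - v) ^ 2 + 4) := by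
        linear_combination (2 * (a + c) + (P + Q) * (w + v)) * hsum + 4 * (P + Q) ^ 2 * hwv
      have hineq : (w - v) ^ 2 * (P * Q - 1) + (P - Q) ^ 2 * ((w - v) ^ 2 / 4 + 1) ≤ 0 := by
        linarith
      have hprod : 0 ≤ (w - v) ^ 2 * (P * Q - 1) :=
        mul_nonneg (sq_nonneg _) (by linarith)
      have hPQeq : P - Q = 0 := by
        have : (P - Q) ^ 2 ≤ 0 := by
          linarith [mul_nonneg (sq_nonneg (P - Q)) (sq_nonneg (w - v))]
        exact pow_eq_zero_iff two_ne_zero |>.1 (le_antisymm this (sq_nonneg _))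
      have hwveq : w - v = 0 := by
        have : (w - v) ^ 2 ≤ 0 := by
          rw [hPQeq] at hineq
          by_contra! hcon
          linarith [mul_pos hcon (sub_pos.2 hPQ)]
        exact pow_eq_zero_iff two_ne_zero |>.1 (le_antisymm this (sq_nonneg _))
      obtain rfl : P = Q := by linarith
      obtain rfl : w = v := by linarith
      rw [hF.quartic_eq] at hneg
      exact absurd (mul_self_nonneg _) hneg.not_ge

/-- The criterion for the normalized quartic. -/
theorem quartic_nonneg_iff (a b c : ℝ) :
    (∀ t, 0 ≤ t → 0 ≤ quartic a b c t) ↔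
      ((disc a b c ≤ 0 ∧ 0 < c + a) ∨ (0 ≤ c ∧ 0 ≤ a ∧ 0 ≤ 3 * b + 1) ∨
        (0 ≤ disc a b c ∧ |a - c| ≤ √(6 * b + 2) ∧
          ((-1 ≤ 3 * b ∧ 3 * b ≤ 3) ∨ (1 < b ∧ -√(6 * b - 2) ≤ a + c)))) := by
  constructor
  · intro hcop
    by_cases hall : ∀ t, 0 ≤ quartic a b c t
    · have hsub := sub_sq_le hall
      refine Or.inr (Or.inr ⟨disc_nonneg hall, Real.abs_le_sqrt hsub, ?_⟩)
      rcases le_or_gt b 1 with hb | hb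
      · exact Or.inl ⟨by nlinarith [sq_nonneg (a - c)], by linarith⟩
      · exact Or.inr ⟨hb, (abs_le.1 (Real.abs_le_sqrt (add_sq_le hall hb))).1⟩
    · push Not at hall
      obtain ⟨t, ht⟩ := hall
      have ht0 : t < 0 := by
        by_contra! h
        exact absurd (hcop t h) ht.not_ge
      obtain ⟨P, Q, w, v, hP, hF⟩ := exists_factorization_of_pos (a := -a) (b := b) (c := -c)
        (neg_pos.2 ht0) (by rwa [quartic_neg, neg_neg])
      obtain ⟨P, rfl⟩ : ∃ P', P = -P' := ⟨-P, by ring⟩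
      obtain ⟨Q, rfl⟩ : ∃ Q', Q = -Q' := ⟨-Q, by ring⟩
      replace hF := hF.neg
      rw [neg_neg, neg_neg] at hF
      replace hP : 1 < P := by linarith
      have hw := hF.w_pos
      have hv := hF.v_pos
      rcases lt_or_ge Q (-1) with hQ | hQ
      · exfalso
        have hpos : 0 < -Q * v := mul_pos (by linarith) hv
        have hval := hcop (-Q * v) hpos.le
        rw [hF.quartic_eq] at hval
        have := nonneg_of_mul_nonneg_right hval (by positivity)
        nlinarith [mul_pos (pow_pos hv 2) (show 0 < Q ^ 2 - 1 by nlinarith)]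
      rcases le_or_gt Q 1 with hQ1 | hQ1
      · left
        constructor
        · have : 0 ≤ (P ^ 2 - 1) * (1 - Q ^ 2) := mul_nonneg (by nlinarith) (by nlinarith)
          have := mul_nonneg this
            (sq_nonneg ((v ^ 2 - w ^ 2) ^ 2 + 4 * (P * w - Q * v) * (P * v - Q * w)))
          linarith [hF.disc_eq]
        · have : 0 < (P + Q) * (w + v) := mul_pos (by linarith) (by linarith)
          linarith [hF.add_eq]
      · right; left
        have hP0 : 0 < P := by linarith
        have hQ0 : 0 < Q := by linarith
        have e1 : 0 < P * w + Q * v := by positivity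
        have e2 : 0 < P * v + Q * w := by positivity
        have e3 : 0 < w ^ 2 + v ^ 2 + 4 * P * Q := by positivity
        exact ⟨by linarith [hF.c_eq], by linarith [hF.a_eq], by linarith [hF.b_eq]⟩
  · intro h t ht
    rcases ht.eq_or_lt with rfl | ht
    · simp [quartic]
    rcases h with ⟨hD, hac⟩ | ⟨hc, ha, hb⟩ | ⟨hD, habs, hb⟩
    · by_contra! hneg
      linarith [add_nonpos_of_neg ht hneg hD]
    · have : 0 ≤ (t ^ 2 - 1) ^ 2 + 4 * a * t ^ 3 + 2 * (3 * b + 1) * t ^ 2 + 4 * c * t := by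
        positivity
      unfold quartic
      linarith
    · have hb0 : 0 ≤ 6 * b + 2 := by
        rcases hb with hb | hb <;> linarith [hb.1]
      refine quartic_nonneg_of_disc_nonneg ht hD ?_ (hb.imp (fun h => by linarith [h.2]) id)
      have := pow_le_pow_left₀ (abs_nonneg _) habs 2
      rwa [Real.sq_sqrt hb0, sq_abs] at this

theorem exists_pow_four_eq {x : ℝ} (hx : 0 < x) : ∃ s, 0 < s ∧ s ^ 4 = x := by
  refine ⟨√√x, by positivity, ?_⟩
  rw [show (4 : ℕ) = 2 * 2 from rfl, pow_mul, Real.sq_sqrt (Real.sqrt_nonneg x),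
    Real.sq_sqrt hx.le]

end QuarticCopositive

open QuarticCopositive in
/-- Necessary and sufficient condition for copositivity of a 4th order 2-dimensional
symmetric tensor with `a₁₁₁₁ > 0`, `a₂₂₂₂ > 0`. -/
theorem copositive_iff_4th_2dim (a1111 a1112 a1122 a1222 a2222 I J : ℝ)
    (h1 : 0 < a1111) (h2 : 0 < a2222)
    (hI : I = a1111 * a2222 - 4 * a1112 * a1222 + 3 * a1122 ^ 2)
    (hJ : J = a1111 * a1122 * a2222 + 2 * a1112 * a1122 * a1222 - a1122 ^ 3 -
      a1111 * a1222 ^ 2 - a1112 ^ 2 * a2222) :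
    (∀ x1 x2 : ℝ, 0 ≤ x1 → 0 ≤ x2 →
      0 ≤ a1111 * x1 ^ 4 + 4 * a1112 * x1 ^ 3 * x2 + 6 * a1122 * x1 ^ 2 * x2 ^ 2 +
        4 * a1222 * x1 * x2 ^ 3 + a2222 * x2 ^ 4) ↔
      ((I ^ 3 - 27 * J ^ 2 ≤ 0 ∧
          0 < a1222 * Real.sqrt a1111 + a1112 * Real.sqrt a2222) ∨
       (0 ≤ a1222 ∧ 0 ≤ a1112 ∧ 0 ≤ 3 * a1122 + Real.sqrt (a1111 * a2222)) ∨
       (0 ≤ I ^ 3 - 27 * J ^ 2 ∧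
        |a1112 * Real.sqrt a2222 - a1222 * Real.sqrt a1111| ≤
          Real.sqrt (6 * a1111 * a1122 * a2222 +
            2 * a1111 * a2222 * Real.sqrt (a1111 * a2222)) ∧
        ((-Real.sqrt (a1111 * a2222) ≤ 3 * a1122 ∧
            3 * a1122 ≤ 3 * Real.sqrt (a1111 * a2222)) ∨
         (Real.sqrt (a1111 * a2222) < a1122 ∧
            -Real.sqrt (6 * a1111 * a1122 * a2222 -
                2 * a1111 * a2222 * Real.sqrt (a1111 * a2222)) ≤
              a1112 * Real.sqrt a2222 + a1222 * Real.sqrt a1111)))) := by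
  obtain ⟨s, hs, rfl⟩ := exists_pow_four_eq h1
  obtain ⟨u, hu, rfl⟩ := exists_pow_four_eq h2
  obtain ⟨a, rfl⟩ : ∃ a, a1112 = s ^ 3 * u * a := ⟨a1112 / (s ^ 3 * u), by field_simp⟩
  obtain ⟨b, rfl⟩ : ∃ b, a1122 = s ^ 2 * u ^ 2 * b := ⟨a1122 / (s ^ 2 * u ^ 2), by field_simp⟩
  obtain ⟨c, rfl⟩ : ∃ c, a1222 = s * u ^ 3 * c := ⟨a1222 / (s * u ^ 3), by field_simp⟩
  have hdisc : I ^ 3 - 27 * J ^ 2 = (s * u) ^ 12 * disc a b c := by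
    subst hI hJ
    unfold disc
    ring
  have hsqs : √(s ^ 4) = s ^ 2 := by
    rw [show s ^ 4 = (s ^ 2) ^ 2 by ring, Real.sqrt_sq (by positivity)]
  have hsqu : √(u ^ 4) = u ^ 2 := by
    rw [show u ^ 4 = (u ^ 2) ^ 2 by ring, Real.sqrt_sq (by positivity)]
  have hsqsu : √(s ^ 4 * u ^ 4) = (s * u) ^ 2 := by
    rw [show s ^ 4 * u ^ 4 = ((s * u) ^ 2) ^ 2 by ring, Real.sqrt_sq (by positivity)]
  have hscale (x : ℝ) : √(((s * u) ^ 3) ^ 2 * x) = (s * u) ^ 3 * √x := by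
    rw [Real.sqrt_mul (by positivity), Real.sqrt_sq (by positivity)]
  have hk2 : 0 < (s * u) ^ 2 := by positivity
  have hk3 : 0 < (s * u) ^ 3 := by positivity
  have hk12 : 0 < (s * u) ^ 12 := by positivity
  have hnonpos : (s * u) ^ 12 * disc a b c ≤ 0 ↔ disc a b c ≤ 0 :=
    ⟨fun h => nonpos_of_mul_nonpos_right h hk12, mul_nonpos_of_nonneg_of_nonpos hk12.le⟩
  rw [hdisc, hsqs, hsqu, hsqsu,
    show 6 * s ^ 4 * (s ^ 2 * u ^ 2 * b) * u ^ 4 + 2 * s ^ 4 * u ^ 4 * (s * u) ^ 2 =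
      ((s * u) ^ 3) ^ 2 * (6 * b + 2) by ring,
    show 6 * s ^ 4 * (s ^ 2 * u ^ 2 * b) * u ^ 4 - 2 * s ^ 4 * u ^ 4 * (s * u) ^ 2 =
      ((s * u) ^ 3) ^ 2 * (6 * b - 2) by ring, hscale, hscale,
    show s * u ^ 3 * c * s ^ 2 + s ^ 3 * u * a * u ^ 2 = (s * u) ^ 3 * (c + a) by ring,
    show s ^ 3 * u * a * u ^ 2 - s * u ^ 3 * c * s ^ 2 = (s * u) ^ 3 * (a - c) by ring,
    show s ^ 3 * u * a * u ^ 2 + s * u ^ 3 * c * s ^ 2 = (s * u) ^ 3 * (a + c) by ring,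
    show 3 * (s ^ 2 * u ^ 2 * b) = (s * u) ^ 2 * (3 * b) by ring,
    show (s * u) ^ 2 * (3 * b) + (s * u) ^ 2 = (s * u) ^ 2 * (3 * b + 1) by ring,
    show -(s * u) ^ 2 = (s * u) ^ 2 * (-1) by ring,
    show 3 * (s * u) ^ 2 = (s * u) ^ 2 * 3 by ring,
    show s ^ 2 * u ^ 2 * b = (s * u) ^ 2 * b by ring,
    ← mul_neg, abs_mul, abs_of_pos hk3,
    mul_le_mul_iff_right₀ hk3, mul_le_mul_iff_right₀ hk3, mul_le_mul_iff_right₀ hk2,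
    mul_le_mul_iff_right₀ hk2, lt_mul_iff_one_lt_right hk2, mul_pos_iff_of_pos_left hk3,
    mul_nonneg_iff_of_pos_left hk12, mul_nonneg_iff_of_pos_left hk2,
    mul_nonneg_iff_of_pos_left (show 0 < s * u ^ 3 by positivity),
    mul_nonneg_iff_of_pos_left (show 0 < s ^ 3 * u by positivity),
    hnonpos, ← quartic_nonneg_iff]
  constructor
  · intro h t ht
    have := h (t / s) (1 / u) (by positivity) (by positivity)
    unfold quartic
    convert this using 1
    field_simp
  · intro h x y hx hy
    rcases hy.eq_or_lt with rfl | hy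
    · have : 0 ≤ s ^ 4 * x ^ 4 := by positivity
      simpa using this
    · obtain ⟨k, hk⟩ : ∃ k, k = u * y := ⟨_, rfl⟩
      obtain ⟨m, hm⟩ : ∃ m, m = s * x := ⟨_, rfl⟩
      have hk0 : 0 < k := hk ▸ mul_pos hu hy
      have hm0 : 0 ≤ m := hm ▸ mul_nonneg hs.le hx
      have hval : 0 ≤ quartic a b c (m / k) * k ^ 4 :=
        mul_nonneg (h (m / k) (by positivity)) (by positivity)
      have hexp : quartic a b c (m / k) * k ^ 4 =
          m ^ 4 + 4 * a * m ^ 3 * k + 6 * b * m ^ 2 * k ^ 2 + 4 * c * m * k ^ 3 + k ^ 4 := by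
        unfold quartic
        field_simp
      rw [hexp, hk, hm] at hval
      linarith
end

section
/- Let λ₁, λ₂, λ₃, λ₄, λ_S, λ_{S1}, λ_{S2} be real numbers, μ ≥ 0, ρ ∈ [0,1]. Set λ₄₀' = 4λ_Sλ₁ − λ_{S1}², λ₀₄' = 4λ_Sλ₂ − λ_{S2}², λ₃₁' = 2λ_{S1}μρ, λ₁₃' = 2λ_{S2}μρ, λ₂₂' = 4λ_Sλ₃ + 4λ_Sλ₄ρ² − μ²ρ² − 2λ_{S1}λ_{S2}, and Δ' = 4(12λ₄₀'λ₀₄' − 3λ₃₁'λ₁₃' + λ₂₂'²)³ − (72λ₄₀'λ₂₂'λ₀₄' + 9λ₃₁'λ₂₂'λ₁₃' − 2λ₂₂'³ − 27λ₄₀'λ₁₃'² − 27λ₃₁'²λ₀₄')². Assume λ₄₀' > 0 and λ₀₄' > 0. Then 4λ_S Ṽ(h₁,h₂) − M(h₁,h₂)² ≥ 0 for all h₁ ≥ 0, h₂ ≥ 0 if and only if one of the following holds: (1) Δ' ≤ 0 and λ₁₃'√λ₄₀' + λ₃₁'√λ₀₄' > 0; or (2) λ₁₃' ≥ 0, λ₃₁'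 ≥ 0, and λ₂₂' + 2√(λ₄₀'λ₀₄') ≥ 0; or (3) Δ' ≥ 0, |λ₃₁'√λ₀₄' − λ₁₃'√λ₄₀'| ≤ 4√(λ₄₀'λ₂₂'λ₀₄' + 2λ₄₀'λ₀₄'√(λ₄₀'λ₀₄')), and either (i) −2√(λ₄₀'λ₀₄') ≤ λ₂₂' ≤ 6√(λ₄₀'λ₀₄'), or (ii) λ₂₂' > 6√(λ₄₀'λ₀₄') and λ₃₁'√λ₀₄' + λ₁₃'√λ₄₀' ≥ −4√(λ₄₀'λ₂₂'λ₀₄' − 2λ₄₀'λ₀₄'√(λ₄₀'λ₀₄')). -/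
/-- The discriminant of `x⁴ + a x³ + b x² + c x + 1`, up to the factor `27`. -/
def quarticDisc (a b c : ℝ) : ℝ :=
  4 * (12 - 3 * a * c + b ^ 2) ^ 3 -
    (72 * b + 9 * a * b * c - 2 * b ^ 3 - 27 * c ^ 2 - 27 * a ^ 2) ^ 2

theorem exists_root_gt_two {g : ℝ → ℝ} (hg : Continuous g) (h2 : g 2 < 0) {T : ℝ} (hT : 2 ≤ T)
    (hgT : 0 ≤ g T) : ∃ t, 2 < t ∧ g t = 0 := by
  obtain ⟨t, ht, h0⟩ := intermediate_value_Icc hT hg.continuousOn ⟨h2.le, hgT⟩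
  refine ⟨t, lt_of_le_of_ne ht.1 ?_, h0⟩
  rintro rfl
  exact h2.ne h0

/-- A root `t > 2` of the resolvent cubic splits the quartic into two real quadratics. -/
theorem exists_quadratic_factors_of_resolvent {a b c t : ℝ} (ht : 2 < t)
    (h : (t - b) * (t ^ 2 - 4) + a * c * t - a ^ 2 - c ^ 2 = 0) :
    ∃ e f A B : ℝ, 0 < e ∧ 0 < f ∧ e * f = 1 ∧ a = 2 * (e * A + f * B) ∧
      b = e ^ 2 + f ^ 2 + 4 * A * B ∧ c = 2 * (f * A + e * B) := by
  obtain ⟨v, hv, hv2⟩ : ∃ v : ℝ, 0 < v ∧ v ^ 2 = t + 2 :=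
    ⟨√(t + 2), Real.sqrt_pos.2 (by linarith), Real.sq_sqrt (by linarith)⟩
  obtain ⟨w, hw, hw2⟩ : ∃ w : ℝ, 0 < w ∧ w ^ 2 = t - 2 :=
    ⟨√(t - 2), Real.sqrt_pos.2 (by linarith), Real.sq_sqrt (by linarith)⟩
  have hwv : w < v := by nlinarith
  refine ⟨(v + w) / 2, (v - w) / 2, ((a + c) / (2 * v) + (a - c) / (2 * w)) / 2,
    ((a + c) / (2 * v) - (a - c) / (2 * w)) / 2, by linarith, by linarith, by nlinarith, ?_, ?_, ?_⟩
  · field_simp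
    ring
  · have key : (a + c) ^ 2 * w ^ 2 - (a - c) ^ 2 * v ^ 2 = 4 * (b - t) * (v ^ 2 * w ^ 2) := by
      rw [hv2, hw2]
      linear_combination 4 * h
    have hprod : 4 * (((a + c) / (2 * v) + (a - c) / (2 * w)) / 2) *
        (((a + c) / (2 * v) - (a - c) / (2 * w)) / 2) = b - t := by
      field_simp
      linear_combination 4 * key
    rw [hprod]
    linear_combination -(hv2 + hw2) / 2
  · field_simp
    ring

/-- Every real quartic `x⁴ + a x³ + b x² + c x + 1` factors as
`(x² + 2eA x + e²)(x² + 2fB x + f²)` with `e, f > 0` and `ef = 1`. -/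
theorem exists_quadratic_factors (a b c : ℝ) :
    ∃ e f A B : ℝ, 0 < e ∧ 0 < f ∧ e * f = 1 ∧ a = 2 * (e * A + f * B) ∧
      b = e ^ 2 + f ^ 2 + 4 * A * B ∧ c = 2 * (f * A + e * B) := by
  by_cases hac : a = c
  · subst hac
    by_cases hb : 4 * (b - 2) ≤ a ^ 2
    · have hs := Real.sq_sqrt (sub_nonneg.2 hb)
      refine ⟨1, 1, (a + √(a ^ 2 - 4 * (b - 2))) / 4, (a - √(a ^ 2 - 4 * (b - 2))) / 4,
        one_pos, one_pos, by ring, by ring, ?_, by ring⟩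
      linear_combination hs / 4
    · obtain ⟨t, ht, h0⟩ := exists_root_gt_two (g := fun t => (t - b) * (t + 2) + a ^ 2)
        (by fun_prop) (by linarith) (T := b + 2) (by nlinarith)
        (by nlinarith)
      exact exists_quadratic_factors_of_resolvent ht (by linear_combination (t - 2) * h0)
  · have hpos : 0 < (a - c) ^ 2 := by
      have := sub_ne_zero.2 hac
      positivity
    obtain ⟨t, ht, h0⟩ := exists_root_gt_two
      (g := fun t => (t - b) * (t ^ 2 - 4) + a * c * t - a ^ 2 - c ^ 2)
      (by fun_prop) (by linarith) (T := 4 + |b| + a ^ 2 + c ^ 2)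
      (by nlinarith [abs_nonneg b])
      (by
        set T := 4 + |b| + a ^ 2 + c ^ 2 with hT
        have hb := le_abs_self b
        have hb0 := abs_nonneg b
        have h1 : a ^ 2 + c ^ 2 + 1 ≤ T - b := by linarith
        have h2 : T + 1 ≤ T ^ 2 - 4 := by nlinarith [sq_nonneg a, sq_nonneg c]
        have h3 : 0 ≤ T := by positivity
        have h4 := mul_le_mul h1 h2 (by linarith) (by nlinarith [sq_nonneg a, sq_nonneg c])
        nlinarith [mul_nonneg h3 (sq_nonneg (a + c)), mul_nonneg h3 (sq_nonneg a),
          mul_nonneg h3 (sq_nonneg c)])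
    exact exists_quadratic_factors_of_resolvent ht h0

theorem eq_zero_of_sub_mul_nonneg {h : ℝ → ℝ} (hh : Continuous h) {r : ℝ} (hr : 0 < r)
    (hn : ∀ x, 0 ≤ x → 0 ≤ (x - r) * h x) : h r = 0 := by
  apply le_antisymm
  · refine le_of_tendsto (hh.continuousWithinAt (s := Set.Iio r)) ?_
    filter_upwards [Ioo_mem_nhdsLT hr] with x hx
    have := hn x hx.1.le
    exact nonpos_of_mul_nonneg_right this (sub_neg.2 hx.2)
  · refine ge_of_tendsto (hh.continuousWithinAt (s := Set.Ioi r)) ?_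
    filter_upwards [self_mem_nhdsWithin] with x hx
    have hx : r < x := hx
    exact nonneg_of_mul_nonneg_right (hn x (hr.trans hx).le) (sub_pos.2 hx)

/-- If `x² + 2eA x + e²` has two distinct positive roots, its product with another quadratic can be
nonnegative on the half-line only if the two quadratics coincide. -/
theorem quadratic_factors_eq_of_lt_neg_one {e f A B : ℝ} (he : 0 < e) (hf : 0 < f)
    (hef : e * f = 1) (hA : A < -1)
    (hn : ∀ x, 0 ≤ x →
      0 ≤ (x ^ 2 + 2 * (e * A) * x + e ^ 2) * (x ^ 2 + 2 * (f * B) * x + f ^ 2)) :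
    A = B ∧ e = 1 ∧ f = 1 := by
  obtain ⟨s, hs, hs2⟩ : ∃ s : ℝ, 0 < s ∧ s ^ 2 = A ^ 2 - 1 :=
    ⟨√(A ^ 2 - 1), Real.sqrt_pos.2 (by nlinarith), Real.sq_sqrt (by nlinarith)⟩
  have hsA : s < -A := by nlinarith
  have hfac : ∀ x, x ^ 2 + 2 * (e * A) * x + e ^ 2 = (x - e * (-A + s)) * (x - e * (-A - s)) := by
    intro x
    linear_combination e ^ 2 * hs2
  have hes : 0 < e * s := mul_pos he hs
  have h1 := eq_zero_of_sub_mul_nonneg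
    (h := fun x => (x - e * (-A - s)) * (x ^ 2 + 2 * (f * B) * x + f ^ 2)) (by fun_prop)
    (r := e * (-A + s)) (mul_pos he (by linarith)) (fun x hx => by
      have := hn x hx
      rwa [hfac, mul_assoc] at this)
  have h2 := eq_zero_of_sub_mul_nonneg
    (h := fun x => (x - e * (-A + s)) * (x ^ 2 + 2 * (f * B) * x + f ^ 2)) (by fun_prop)
    (r := e * (-A - s)) (mul_pos he (by linarith)) (fun x hx => by
      have := hn x hx
      rwa [hfac, mul_comm (x - e * (-A + s)), mul_assoc] at this)
  have h1' := (mul_eq_zero.1 h1).resolve_left (by nlinarith)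
  have h2' := (mul_eq_zero.1 h2).resolve_left (by nlinarith)
  have hlin : e * A = f * B := by
    have : (2 * (e * s)) * (2 * (f * B - e * A)) = 0 := by linear_combination h1' - h2'
    have := (mul_eq_zero.1 this).resolve_left (by positivity)
    linarith
  have hsq : e ^ 2 = f ^ 2 := by
    have := hfac (e * (-A + s))
    rw [sub_self, zero_mul] at this
    linear_combination this - h1' - 2 * (e * (-A + s)) * hlin
  have hef' : e = f := by
    rwa [sq_eq_sq₀ he.le hf.le] at hsq
  subst hef'
  have he1 : e = 1 := by nlinarith
  subst he1
  exact ⟨by linarith, rfl, rfl⟩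

theorem quadratic_nonneg_of_neg_one_le {e A x y : ℝ} (he : 0 < e) (hA : -1 ≤ A) (hx : 0 ≤ x)
    (hy : 0 ≤ y) : 0 ≤ x ^ 2 + 2 * (e * A) * x * y + e ^ 2 * y ^ 2 := by
  have : 0 ≤ e * (A + 1) * x * y := by
    have : 0 ≤ A + 1 := by linarith
    positivity
  nlinarith [sq_nonneg (x - e * y)]

theorem quarticDisc_factored {e f : ℝ} (A B : ℝ) (hef : e * f = 1) :
    quarticDisc (2 * (e * A + f * B)) (e ^ 2 + f ^ 2 + 4 * A * B) (2 * (f * A + e * B)) =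
      432 * ((A ^ 2 - 1) * (B ^ 2 - 1)) *
        ((e ^ 2 + f ^ 2 - 2 * A * B) ^ 2 - 4 * ((A ^ 2 - 1) * (B ^ 2 - 1))) ^ 2 := by
  have hac : 2 * (e * A + f * B) * (2 * (f * A + e * B)) =
      4 * (A ^ 2 + B ^ 2 + A * B * (e ^ 2 + f ^ 2)) := by
    linear_combination 4 * (A ^ 2 + B ^ 2) * hef
  have hsum : (2 * (f * A + e * B)) ^ 2 + (2 * (e * A + f * B)) ^ 2 =
      4 * ((e ^ 2 + f ^ 2) * (A ^ 2 + B ^ 2) + 4 * A * B) := by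
    linear_combination 16 * A * B * hef
  have hdisc : ∀ a b c : ℝ, quarticDisc a b c = 4 * (12 - 3 * (a * c) + b ^ 2) ^ 3 -
      (72 * b + 9 * b * (a * c) - 2 * b ^ 3 - 27 * (c ^ 2 + a ^ 2)) ^ 2 := by
    intro a b c
    rw [quarticDisc]
    ring
  rw [hdisc, hac, hsum]
  ring

theorem quarticDisc_factored_nonneg_iff {e f : ℝ} (A B : ℝ) (hef : e * f = 1) :
    0 ≤ quarticDisc (2 * (e * A + f * B)) (e ^ 2 + f ^ 2 + 4 * A * B) (2 * (f * A + e * B)) ↔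
      0 ≤ (A ^ 2 - 1) * (B ^ 2 - 1) := by
  rw [quarticDisc_factored A B hef]
  refine ⟨fun h => ?_, fun h => by positivity⟩
  by_contra! hneg
  have hres : 0 < (e ^ 2 + f ^ 2 - 2 * A * B) ^ 2 - 4 * ((A ^ 2 - 1) * (B ^ 2 - 1)) := by
    nlinarith [sq_nonneg (e ^ 2 + f ^ 2 - 2 * A * B)]
  nlinarith [mul_neg_of_neg_of_pos hneg (pow_pos hres 2)]

/-- The sign conditions on `x⁴ + a x³ + b x² + c x + 1` for nonnegativity on the half-line. -/
def QuarticCriterion (a b c : ℝ) : Prop :=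
  (quarticDisc a b c ≤ 0 ∧ 0 < c + a) ∨ (0 ≤ c ∧ 0 ≤ a ∧ 0 ≤ b + 2) ∨
    (0 ≤ quarticDisc a b c ∧ |a - c| ≤ 4 * √(b + 2) ∧
      ((-2 ≤ b ∧ b ≤ 6) ∨ (6 < b ∧ -4 * √(b - 2) ≤ a + c)))

theorem QuarticCriterion.symm_factors {e f A B : ℝ}
    (h : QuarticCriterion (2 * (e * A + f * B)) (e ^ 2 + f ^ 2 + 4 * A * B)
      (2 * (f * A + e * B))) :
    QuarticCriterion (2 * (f * B + e * A)) (f ^ 2 + e ^ 2 + 4 * B * A)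
      (2 * (e * B + f * A)) := by
  convert h using 1 <;> ring

/-- Quadratic factors with `A, B ∈ [-1, 1]` satisfy the third alternative of the criterion. -/
theorem quarticCriterion_of_sq_le_one {e f A B : ℝ} (hef : e * f = 1)
    (hA : A ^ 2 ≤ 1) (hB : B ^ 2 ≤ 1) :
    QuarticCriterion (2 * (e * A + f * B)) (e ^ 2 + f ^ 2 + 4 * A * B) (2 * (f * A + e * B)) := by
  obtain ⟨hA1, hA2⟩ := abs_le.1 ((sq_le_one_iff_abs_le_one A).1 hA)
  obtain ⟨hB1, hB2⟩ := abs_le.1 ((sq_le_one_iff_abs_le_one B).1 hB)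
  have hk : 0 ≤ (e - f) ^ 2 := sq_nonneg _
  have hAB : 0 ≤ 1 + A * B := by nlinarith
  refine .inr (.inr ⟨(quarticDisc_factored_nonneg_iff A B hef).2 (by nlinarith), ?_, ?_⟩)
  · have h4 : (4 : ℝ) * √(e ^ 2 + f ^ 2 + 4 * A * B + 2) =
        √(16 * (e ^ 2 + f ^ 2 + 4 * A * B + 2)) := by
      rw [Real.sqrt_mul (by norm_num), show (16 : ℝ) = 4 ^ 2 by norm_num,
        Real.sqrt_sq (by norm_num)]
    rw [h4]
    apply Real.abs_le_sqrt
    have hd : (A - B) ^ 2 ≤ 4 := by nlinarith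
    nlinarith [mul_le_mul_of_nonneg_left hd hk]
  · rcases le_or_gt (e ^ 2 + f ^ 2 + 4 * A * B) 6 with h6 | h6
    · exact .inl ⟨by nlinarith, h6⟩
    · refine .inr ⟨h6, ?_⟩
      have h4 : (4 : ℝ) * √(e ^ 2 + f ^ 2 + 4 * A * B - 2) =
          √(16 * (e ^ 2 + f ^ 2 + 4 * A * B - 2)) := by
        rw [Real.sqrt_mul (by norm_num), show (16 : ℝ) = 4 ^ 2 by norm_num,
          Real.sqrt_sq (by norm_num)]
      rw [neg_mul, h4]
      apply Real.neg_sqrt_le_of_sq_le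
      have hs : 0 ≤ 4 - (A + B) ^ 2 := by nlinarith
      have hkm : 4 - 4 * (A * B) ≤ (e - f) ^ 2 := by nlinarith
      have hbase : 0 ≤ (1 - A * B) * (4 - (A + B) ^ 2) - (A - B) ^ 2 := by
        have hs2 : (A + B) ^ 2 ≤ (1 + A * B) ^ 2 := by
          nlinarith [mul_nonneg (sub_nonneg.2 hA) (sub_nonneg.2 hB)]
        have hm : A * B ≤ 1 := by nlinarith [sq_nonneg (A - B)]
        have hcub : 0 ≤ (A * B - 1) ^ 2 * (A * B + 2) := mul_nonneg (sq_nonneg _) (by linarith)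
        have := mul_le_mul_of_nonneg_left hs2 (show 0 ≤ 2 - A * B by linarith)
        linarith
      nlinarith [mul_le_mul_of_nonneg_right hkm hs]

theorem quarticCriterion_of_neg_one_le {e f A B : ℝ} (he : 0 < e) (hf : 0 < f) (hef : e * f = 1)
    (hA : -1 ≤ A) (hB : -1 ≤ B) :
    QuarticCriterion (2 * (e * A + f * B)) (e ^ 2 + f ^ 2 + 4 * A * B) (2 * (f * A + e * B)) := by
  wlog hBA : B ≤ A generalizing e f A B
  · exact (this hf he (by linarith) hB hA (le_of_not_ge hBA)).symm_factors
  rcases le_or_gt A 1 with hA1 | hA1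
  · exact quarticCriterion_of_sq_le_one hef (by nlinarith) (by nlinarith)
  rcases le_or_gt 1 B with hB1 | hB1
  · exact .inr (.inl ⟨by positivity, by positivity, by positivity⟩)
  · refine .inl ⟨?_, ?_⟩
    · rw [quarticDisc_factored A B hef]
      refine mul_nonpos_of_nonpos_of_nonneg ?_ (sq_nonneg _)
      nlinarith [mul_nonneg (show 0 ≤ A ^ 2 - 1 by nlinarith) (show 0 ≤ 1 - B ^ 2 by nlinarith)]
    · have : 0 < (e + f) * (A + B) := mul_pos (by linarith) (by linarith)
      linarith

theorem quarticCriterion_square (A : ℝ) :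
    QuarticCriterion (2 * (1 * A + 1 * A)) (1 ^ 2 + 1 ^ 2 + 4 * A * A) (2 * (1 * A + 1 * A)) := by
  refine .inr (.inr ⟨(quarticDisc_factored_nonneg_iff A A (by norm_num)).2
    (mul_self_nonneg _), by simp, ?_⟩)
  rcases le_or_gt (1 ^ 2 + 1 ^ 2 + 4 * A * A) 6 with h6 | h6
  · exact .inl ⟨by linarith [mul_self_nonneg A], h6⟩
  · refine .inr ⟨h6, ?_⟩
    rw [show (1 : ℝ) ^ 2 + 1 ^ 2 + 4 * A * A - 2 = (2 * A) ^ 2 by ring, Real.sqrt_sq_eq_abs]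
    linarith [neg_abs_le (2 * A)]

/-- A factor with two distinct positive roots violates the criterion, unless the quartic is a
square. -/
theorem quarticCriterion_lt_neg_one {e f A B : ℝ} (he : 0 < e) (hf : 0 < f) (hef : e * f = 1)
    (h : QuarticCriterion (2 * (e * A + f * B)) (e ^ 2 + f ^ 2 + 4 * A * B) (2 * (f * A + e * B)))
    (hA : A < -1) :
    (A = B ∧ e = 1 ∧ f = 1) ∨
      (0 ≤ 2 * (f * A + e * B) ∧ 0 ≤ 2 * (e * A + f * B) ∧
        0 ≤ e ^ 2 + f ^ 2 + 4 * A * B + 2) := by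
  have hk : 0 ≤ (e - f) ^ 2 := sq_nonneg _
  rcases h with ⟨hD, hS⟩ | h | ⟨hD, h1, h2⟩
  · exfalso
    have hAB : 0 < A + B := by
      have : 0 < (e + f) * (A + B) := by linarith
      exact (mul_pos_iff_of_pos_left (by linarith)).1 this
    rw [quarticDisc_factored A B hef] at hD
    have hm : A * B < -1 := by nlinarith
    have hpos : 0 < (A ^ 2 - 1) * (B ^ 2 - 1) := mul_pos (by nlinarith) (by nlinarith)
    have hres : 0 < (e ^ 2 + f ^ 2 - 2 * A * B) ^ 2 - 4 * ((A ^ 2 - 1) * (B ^ 2 - 1)) := by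
      have h2 : 2 - 2 * (A * B) ≤ e ^ 2 + f ^ 2 - 2 * A * B := by nlinarith
      have h3 := pow_le_pow_left₀ (by linarith) h2 2
      nlinarith
    have := mul_pos hpos (pow_pos hres 2)
    linarith
  · exact .inr h
  · left
    rw [quarticDisc_factored_nonneg_iff A B hef] at hD
    have hA2 : 0 < A ^ 2 - 1 := by nlinarith
    have hB2 : 1 ≤ B ^ 2 := by linarith [(mul_nonneg_iff_of_pos_left hA2).1 hD]
    rcases le_or_gt 0 B with hB | hB
    · exfalso
      have hB1 : 1 ≤ B := by nlinarith
      have hm : A * B < -1 := by nlinarith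
      have hb : 0 ≤ e ^ 2 + f ^ 2 + 4 * A * B + 2 := by
        rcases h2 with h2 | h2 <;> linarith
      have hsq := pow_le_pow_left₀ (abs_nonneg _) h1 2
      rw [sq_abs, mul_pow, Real.sq_sqrt hb] at hsq
      have hd : 4 ≤ (A - B) ^ 2 := by nlinarith
      nlinarith [mul_le_mul_of_nonneg_left hd hk]
    · have hB1 : B ≤ -1 := by nlinarith
      have hm : 1 < A * B := by nlinarith
      rcases h2 with ⟨-, h2⟩ | ⟨-, h2⟩
      · exfalso
        nlinarith
      · have hneg : (e + f) * (A + B) < 0 := mul_neg_of_pos_of_neg (by linarith) (by linarith)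
        have hsq : (2 * ((e + f) * (A + B))) ^ 2 ≤
            (4 * √(e ^ 2 + f ^ 2 + 4 * A * B - 2)) ^ 2 := by
          apply sq_le_sq'
          · linarith
          · have := Real.sqrt_nonneg (e ^ 2 + f ^ 2 + 4 * A * B - 2)
            linarith
        rw [mul_pow 4, Real.sq_sqrt (by nlinarith)] at hsq
        have hs : 0 < (A + B) ^ 2 - 4 := by nlinarith
        have hmain : 4 * (A - B) ^ 2 + (e - f) ^ 2 * ((A + B) ^ 2 - 4) ≤ 0 := by
          nlinarith
        have hp := mul_nonneg hk hs.le
        have hAB : (A - B) ^ 2 = 0 := le_antisymm (by linarith) (sq_nonneg _)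
        have hef0 : (e - f) ^ 2 * ((A + B) ^ 2 - 4) = 0 :=
          le_antisymm (by linarith [sq_nonneg (A - B)]) hp
        have hef1 : e = f :=
          sub_eq_zero.1 (pow_eq_zero_iff two_ne_zero |>.1
            ((mul_eq_zero.1 hef0).resolve_right hs.ne'))
        subst hef1
        have he1 : e = 1 := by nlinarith
        exact ⟨sub_eq_zero.1 (pow_eq_zero_iff two_ne_zero |>.1 hAB), he1, he1⟩

/-- A binary quartic with unit end coefficients is nonnegative on the closed quadrant iff it
satisfies `QuarticCriterion`. -/
theorem quartic_nonneg_iff_criterion (a b c : ℝ) :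
    (∀ x y : ℝ, 0 ≤ x → 0 ≤ y →
      0 ≤ x ^ 4 + a * x ^ 3 * y + b * x ^ 2 * y ^ 2 + c * x * y ^ 3 + y ^ 4) ↔
      QuarticCriterion a b c := by
  obtain ⟨e, f, A, B, he, hf, hef, rfl, rfl, rfl⟩ := exists_quadratic_factors a b c
  have hfac : ∀ x y : ℝ, x ^ 4 + 2 * (e * A + f * B) * x ^ 3 * y +
      (e ^ 2 + f ^ 2 + 4 * A * B) * x ^ 2 * y ^ 2 + 2 * (f * A + e * B) * x * y ^ 3 + y ^ 4 =
      (x ^ 2 + 2 * (e * A) * x * y + e ^ 2 * y ^ 2) *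
        (x ^ 2 + 2 * (f * B) * x * y + f ^ 2 * y ^ 2) := by
    intro x y
    linear_combination (-4 * A * B * x ^ 2 * y ^ 2 - 2 * (f * A + e * B) * x * y ^ 3 -
      (e * f + 1) * y ^ 4) * hef
  constructor
  · intro hn
    have hn1 : ∀ x, 0 ≤ x →
        0 ≤ (x ^ 2 + 2 * (e * A) * x + e ^ 2) * (x ^ 2 + 2 * (f * B) * x + f ^ 2) := by
      intro x hx
      have := hn x 1 hx zero_le_one
      rw [hfac] at this
      simpa using this
    rcases lt_or_ge A (-1) with hA | hA
    · obtain ⟨rfl, rfl, rfl⟩ := quadratic_factors_eq_of_lt_neg_one he hf hef hA hn1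
      exact quarticCriterion_square A
    rcases lt_or_ge B (-1) with hB | hB
    · obtain ⟨rfl, rfl, rfl⟩ := quadratic_factors_eq_of_lt_neg_one hf he (by linarith) hB
        (fun x hx => by rw [mul_comm]; exact hn1 x hx)
      exact quarticCriterion_square B
    exact quarticCriterion_of_neg_one_le he hf hef hA hB
  · intro h x y hx hy
    have hsq : (A = B ∧ e = 1 ∧ f = 1) → 0 ≤ (x ^ 2 + 2 * (e * A) * x * y + e ^ 2 * y ^ 2) *
        (x ^ 2 + 2 * (f * B) * x * y + f ^ 2 * y ^ 2) := by
      rintro ⟨rfl, rfl, rfl⟩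
      exact mul_self_nonneg _
    have hcoef : (0 ≤ 2 * (f * A + e * B) ∧ 0 ≤ 2 * (e * A + f * B) ∧
        0 ≤ e ^ 2 + f ^ 2 + 4 * A * B + 2) →
        0 ≤ (x ^ 2 + 2 * (e * A) * x * y + e ^ 2 * y ^ 2) *
          (x ^ 2 + 2 * (f * B) * x * y + f ^ 2 * y ^ 2) := by
      rintro ⟨hc, ha, hb⟩
      rw [← hfac]
      have h1 : 0 ≤ 2 * (e * A + f * B) * x ^ 3 * y := by positivity
      have h2 : 0 ≤ 2 * (f * A + e * B) * x * y ^ 3 := by positivity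
      have h3 : 0 ≤ (e ^ 2 + f ^ 2 + 4 * A * B + 2) * (x ^ 2 * y ^ 2) := by positivity
      nlinarith [sq_nonneg (x ^ 2 - y ^ 2)]
    rw [hfac]
    rcases lt_or_ge A (-1) with hA | hA
    · exact (quarticCriterion_lt_neg_one he hf hef h hA).elim hsq hcoef
    rcases lt_or_ge B (-1) with hB | hB
    · rcases quarticCriterion_lt_neg_one hf he (by linarith) h.symm_factors hB with
        ⟨h1, h2, h3⟩ | ⟨h1, h2, h3⟩
      · exact hsq ⟨h1.symm, h3, h2⟩
      · exact hcoef ⟨by linarith, by linarith, by linarith⟩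
    exact mul_nonneg (quadratic_nonneg_of_neg_one_le he hA hx hy)
      (quadratic_nonneg_of_neg_one_le hf hB hx hy)

/-- Necessary and sufficient condition for `4λ_S Ṽ(h₁,h₂) − M(h₁,h₂)² ≥ 0` on `ℝ²₊`,
given `λ₄₀' > 0` and `λ₀₄' > 0`, in terms of the primed coefficients of the binary
quartic `4λ_S Ṽ − M²`. -/
theorem discriminant_quartic_nonneg_iff (l1 l2 l3 l4 lS lS1 lS2 mu rho : ℝ)
    (hmu : 0 ≤ mu) (hrho : rho ∈ Set.Icc (0 : ℝ) 1)
    (l40 l04 l31 l13 l22 D : ℝ)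
    (h40 : l40 = 4 * lS * l1 - lS1 ^ 2)
    (h04 : l04 = 4 * lS * l2 - lS2 ^ 2)
    (h31 : l31 = 2 * lS1 * mu * rho)
    (h13 : l13 = 2 * lS2 * mu * rho)
    (h22 : l22 = 4 * lS * l3 + 4 * lS * l4 * rho ^ 2 - mu ^ 2 * rho ^ 2 - 2 * lS1 * lS2)
    (hD : D = 4 * (12 * l40 * l04 - 3 * l31 * l13 + l22 ^ 2) ^ 3 -
      (72 * l40 * l22 * l04 + 9 * l31 * l22 * l13 - 2 * l22 ^ 3 -
        27 * l40 * l13 ^ 2 - 27 * l31 ^ 2 * l04) ^ 2)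
    (hl40 : 0 < l40) (hl04 : 0 < l04) :
    (∀ h1 h2 : ℝ, 0 ≤ h1 → 0 ≤ h2 →
        0 ≤ 4 * lS * (l1 * h1 ^ 4 + l2 * h2 ^ 4 + (l3 + l4 * rho ^ 2) * h1 ^ 2 * h2 ^ 2) -
          (lS1 * h1 ^ 2 + lS2 * h2 ^ 2 - mu * rho * h1 * h2) ^ 2) ↔
      ((D ≤ 0 ∧ 0 < l13 * Real.sqrt l40 + l31 * Real.sqrt l04) ∨
       (0 ≤ l13 ∧ 0 ≤ l31 ∧ 0 ≤ l22 + 2 * Real.sqrt (l40 * l04)) ∨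
       (0 ≤ D ∧
        |l31 * Real.sqrt l04 - l13 * Real.sqrt l40| ≤
          4 * Real.sqrt (l40 * l22 * l04 + 2 * l40 * l04 * Real.sqrt (l40 * l04)) ∧
        ((-2 * Real.sqrt (l40 * l04) ≤ l22 ∧ l22 ≤ 6 * Real.sqrt (l40 * l04)) ∨
         (6 * Real.sqrt (l40 * l04) < l22 ∧
          -4 * Real.sqrt (l40 * l22 * l04 - 2 * l40 * l04 * Real.sqrt (l40 * l04)) ≤
            l31 * Real.sqrt l04 + l13 * Real.sqrt l40)))) := by
  obtain ⟨p, hp, hp4⟩ : ∃ p : ℝ, 0 < p ∧ l40 = p ^ 4 :=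
    ⟨√√l40, by positivity, by
      rw [show (4 : ℕ) = 2 * 2 by norm_num, pow_mul, Real.sq_sqrt (by positivity),
        Real.sq_sqrt hl40.le]⟩
  obtain ⟨q, hq, hq4⟩ : ∃ q : ℝ, 0 < q ∧ l04 = q ^ 4 :=
    ⟨√√l04, by positivity, by
      rw [show (4 : ℕ) = 2 * 2 by norm_num, pow_mul, Real.sq_sqrt (by positivity),
        Real.sq_sqrt hl04.le]⟩
  obtain ⟨a, ha⟩ : ∃ a, l31 = a * (p ^ 3 * q) := ⟨l31 / (p ^ 3 * q), by field_simp⟩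
  obtain ⟨b, hb⟩ : ∃ b, l22 = b * (p ^ 2 * q ^ 2) := ⟨l22 / (p ^ 2 * q ^ 2), by field_simp⟩
  obtain ⟨c, hc⟩ : ∃ c, l13 = c * (p * q ^ 3) := ⟨l13 / (p * q ^ 3), by field_simp⟩
  have hquad : ∀ h1 h2 : ℝ,
      4 * lS * (l1 * h1 ^ 4 + l2 * h2 ^ 4 + (l3 + l4 * rho ^ 2) * h1 ^ 2 * h2 ^ 2) -
        (lS1 * h1 ^ 2 + lS2 * h2 ^ 2 - mu * rho * h1 * h2) ^ 2 =
      (p * h1) ^ 4 + a * (p * h1) ^ 3 * (q * h2) + b * (p * h1) ^ 2 * (q * h2) ^ 2 +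
        c * (p * h1) * (q * h2) ^ 3 + (q * h2) ^ 4 := by
    intro h1 h2
    linear_combination h1 ^ 4 * (hp4 - h40) + h2 ^ 4 * (hq4 - h04) + h1 ^ 3 * h2 * (ha - h31) +
      h1 ^ 2 * h2 ^ 2 * (hb - h22) + h1 * h2 ^ 3 * (hc - h13)
  have hLHS : (∀ h1 h2 : ℝ, 0 ≤ h1 → 0 ≤ h2 →
      0 ≤ 4 * lS * (l1 * h1 ^ 4 + l2 * h2 ^ 4 + (l3 + l4 * rho ^ 2) * h1 ^ 2 * h2 ^ 2) -
        (lS1 * h1 ^ 2 + lS2 * h2 ^ 2 - mu * rho * h1 * h2) ^ 2) ↔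
      ∀ x y : ℝ, 0 ≤ x → 0 ≤ y →
        0 ≤ x ^ 4 + a * x ^ 3 * y + b * x ^ 2 * y ^ 2 + c * x * y ^ 3 + y ^ 4 := by
    simp only [hquad]
    refine ⟨fun h x y hx hy => ?_, fun h x y hx hy => h _ _ (by positivity) (by positivity)⟩
    have := h (x / p) (y / q) (by positivity) (by positivity)
    rwa [mul_div_cancel₀ _ hp.ne', mul_div_cancel₀ _ hq.ne'] at this
  rw [hLHS, quartic_nonneg_iff_criterion, QuarticCriterion]
  clear hLHS hquad h40 h04 h31 h13 h22
  subst hp4 hq4 ha hb hc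
  have hpq2 : 0 < p ^ 2 * q ^ 2 := by positivity
  have hpq3 : 0 < (p * q) ^ 3 := by positivity
  have hsp : √(p ^ 4) = p ^ 2 := by
    rw [show p ^ 4 = (p ^ 2) ^ 2 by ring, Real.sqrt_sq (by positivity)]
  have hsq : √(q ^ 4) = q ^ 2 := by
    rw [show q ^ 4 = (q ^ 2) ^ 2 by ring, Real.sqrt_sq (by positivity)]
  have hspq : √(p ^ 4 * q ^ 4) = p ^ 2 * q ^ 2 := by
    rw [show p ^ 4 * q ^ 4 = (p ^ 2 * q ^ 2) ^ 2 by ring, Real.sqrt_sq (by positivity)]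
  have hD' : D = (p * q) ^ 12 * quarticDisc a b c := by
    rw [hD, quarticDisc]
    ring
  have hscale : ∀ z : ℝ, √(((p * q) ^ 3) ^ 2 * z) = (p * q) ^ 3 * √z := by
    intro z
    rw [Real.sqrt_mul (by positivity), Real.sqrt_sq hpq3.le]
  have hplus : √(p ^ 4 * (b * (p ^ 2 * q ^ 2)) * q ^ 4 + 2 * p ^ 4 * q ^ 4 * (p ^ 2 * q ^ 2)) =
      (p * q) ^ 3 * √(b + 2) := by
    rw [← hscale]
    ring_nf
  have hminus : √(p ^ 4 * (b * (p ^ 2 * q ^ 2)) * q ^ 4 - 2 * p ^ 4 * q ^ 4 * (p ^ 2 * q ^ 2)) =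
      (p * q) ^ 3 * √(b - 2) := by
    rw [← hscale]
    ring_nf
  have hD12 : 0 < (p * q) ^ 12 := by positivity
  have hsum : c * (p * q ^ 3) * p ^ 2 + a * (p ^ 3 * q) * q ^ 2 = (p * q) ^ 3 * (c + a) := by ring
  have hsum' : a * (p ^ 3 * q) * q ^ 2 + c * (p * q ^ 3) * p ^ 2 = (p * q) ^ 3 * (a + c) := by ring
  have hdiff : |a * (p ^ 3 * q) * q ^ 2 - c * (p * q ^ 3) * p ^ 2| = (p * q) ^ 3 * |a - c| := by
    rw [show a * (p ^ 3 * q) * q ^ 2 - c * (p * q ^ 3) * p ^ 2 = (p * q) ^ 3 * (a - c) by ring,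
      abs_mul, abs_of_pos hpq3]
  have e1 : D ≤ 0 ↔ quarticDisc a b c ≤ 0 := by
    rw [← not_lt, ← not_lt, hD', mul_pos_iff_of_pos_left hD12]
  have e2 : 0 ≤ D ↔ 0 ≤ quarticDisc a b c := by rw [hD', mul_nonneg_iff_of_pos_left hD12]
  have e3 : 0 ≤ c * (p * q ^ 3) ↔ 0 ≤ c := mul_nonneg_iff_of_pos_right (by positivity)
  have e4 : 0 ≤ a * (p ^ 3 * q) ↔ 0 ≤ a := mul_nonneg_iff_of_pos_right (by positivity)
  have e5 : 0 ≤ b * (p ^ 2 * q ^ 2) + 2 * (p ^ 2 * q ^ 2) ↔ 0 ≤ b + 2 := by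
    rw [← add_mul, mul_nonneg_iff_of_pos_right hpq2]
  have e6 : (p * q) ^ 3 * |a - c| ≤ 4 * ((p * q) ^ 3 * √(b + 2)) ↔ |a - c| ≤ 4 * √(b + 2) := by
    rw [mul_left_comm, mul_le_mul_iff_right₀ hpq3]
  have e7 : -4 * ((p * q) ^ 3 * √(b - 2)) ≤ (p * q) ^ 3 * (a + c) ↔ -4 * √(b - 2) ≤ a + c := by
    rw [mul_left_comm, mul_le_mul_iff_right₀ hpq3]
  rw [hsp, hsq, hspq, hplus, hminus, hsum, hsum', hdiff, e1, e2, e3, e4, e5, e6, e7,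
    mul_le_mul_iff_left₀ hpq2, mul_le_mul_iff_left₀ hpq2, mul_lt_mul_iff_left₀ hpq2,
    mul_pos_iff_of_pos_left hpq3]
end
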